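/- arXiv:1905.12312 — 2 statements merged into one kernel-verified Lean document; each statement's English description precedes it below -/
import Mathlib

section
/- The Wronskian Hermite polynomials satisfy, for any non-empty partition λ: F_λ·He_λ(x) = x·Σ_{μ⋖λ} F_μ·He_μ(x) − (|λ|−1)·Σ_{ρ∈R₂⁻(λ)} (−1)^{ht(λ/ρ)}·F_ρ·He_ρ(x). -/
open Polynomial Finset

/-- `AddBox μ lam` means the Young diagram `lam` is obtained from `μ` by adding one box,
i.e. `μ ⋖ lam` in the Young lattice. -/
def AddBox (μ lam : YoungDiagram) : Prop := μ ≤ lam ∧ lam.card = μ.card + 1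

/-- The sum of the contents (column − row) of the boxes of `lam` not in `μ`;
when `lam/μ` is a single box this is the content of that box. -/
def skewContent (lam μ : YoungDiagram) : ℤ :=
  ∑ c ∈ lam.cells \ μ.cells, ((c.2 : ℤ) - (c.1 : ℤ))

/-- `F μ`: the number of standard Young tableaux of shape `μ`, i.e. bijective fillings of the
cells of `μ` by `0, …, |μ|-1` that increase along rows and columns. -/
noncomputable def SYTCount (μ : YoungDiagram) : ℕ :=
  Nat.card {T : μ.cells ≃ Fin μ.card //
    ∀ a b : μ.cells, (a : ℕ × ℕ).1 ≤ (b : ℕ × ℕ).1 → (a : ℕ × ℕ).2 ≤ (b : ℕ × ℕ).2 →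
      (T a : ℕ) ≤ (T b : ℕ)}

/-- `lam` is obtained from `ρ` by adding a horizontal domino. -/
def AddDominoH (ρ lam : YoungDiagram) : Prop :=
  ρ ≤ lam ∧ ∃ i j : ℕ, lam.cells \ ρ.cells = {(i, j), (i, j + 1)}

/-- `lam` is obtained from `ρ` by adding a vertical domino. -/
def AddDominoV (ρ lam : YoungDiagram) : Prop :=
  ρ ≤ lam ∧ ∃ i j : ℕ, lam.cells \ ρ.cells = {(i, j), (i + 1, j)}

/-- The number of (nonempty) rows of a Young diagram. -/
def nrows (μ : YoungDiagram) : ℕ := μ.colLen 0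

/-- The degree vector of a partition: `n_i = λ_i + r - i` (here `0`-indexed). -/
def degVec (μ : YoungDiagram) (i : Fin (nrows μ)) : ℕ :=
  μ.rowLen i + (nrows μ - 1 - (i : ℕ))

/-- Probabilists' Hermite polynomials: `He_0 = 1`, `He_1 = x`,
`He_n = x He_{n-1} - (n-1) He_{n-2}`. -/
noncomputable def He : ℕ → Polynomial ℝ
  | 0 => 1
  | 1 => X
  | (n + 2) => X * He (n + 1) - C ((n : ℝ) + 1) * He n

/-- The Wronskian of a family of polynomials. -/
noncomputable def Wr {r : ℕ} (p : Fin r → Polynomial ℝ) : Polynomial ℝ :=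
  Matrix.det (Matrix.of fun i j : Fin r => derivative^[(i : ℕ)] (p j))

/-- The Wronskian Hermite polynomial
`He_μ = Wr[He_{n_1}, …, He_{n_r}] / ∏_{i<j} (n_j - n_i)`. -/
noncomputable def HeW (μ : YoungDiagram) : Polynomial ℝ :=
  C (∏ p ∈ Finset.univ.filter (fun p : Fin (nrows μ) × Fin (nrows μ) => p.1 < p.2),
        ((degVec μ p.2 : ℝ) - (degVec μ p.1 : ℝ)))⁻¹
    * Wr (fun i => He (degVec μ i))

/-! ### Jacobi–Trudi style determinants -/

/-- The determinant `det (h (m_j + i))`. -/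
def JT {R : Type*} [CommRing R] (h : ℤ → R) (N : ℕ) (m : ℕ → ℤ) : R :=
  Matrix.det (Matrix.of fun i j : Fin N => h (m j + (i : ℕ)))

/-- The Schur-like function attached to a Young diagram. -/
def SchurJT {R : Type*} [CommRing R] (h : ℤ → R) (μ : YoungDiagram) : R :=
  JT h (nrows μ) (fun j => (μ.rowLen j : ℤ) - j)

theorem JT_update {R : Type*} [CommRing R] (h : ℤ → R) (N : ℕ) (m : ℕ → ℤ) (j : Fin N) (z : ℤ) :
    JT h N (Function.update m j z) =
      (Matrix.updateCol (Matrix.of fun i j : Fin N => h (m j + (i : ℕ))) j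
        (fun i => h (z + (i : ℕ)))).det := by
  unfold JT
  congr 1
  ext i k
  by_cases hk : k = j
  · subst hk; simp
  · have : (k : ℕ) ≠ j := fun h => hk (Fin.ext h)
    simp [hk, Function.update_of_ne this]

theorem JT_congr {R : Type*} [CommRing R] (h : ℤ → R) (N : ℕ) (m m' : ℕ → ℤ)
    (hm : ∀ j < N, m j = m' j) : JT h N m = JT h N m' := by
  unfold JT
  congr 1
  ext i k
  simp [hm k k.2]

theorem det_weight {R : Type*} [CommRing R] {N : ℕ} (A : Matrix (Fin N) (Fin N) R)
    (u v : Fin N → R) :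
    ∑ j, (Matrix.updateCol A j (fun i => (u j + v i) * A i j)).det
      = (∑ j, (u j + v j)) * A.det := by
  have h1 : ∀ j, (Matrix.updateCol A j (fun i => (u j + v i) * A i j)).det
      = ∑ i, (u j + v i) * (A i j * A.adjugate j i) := by
    intro j
    rw [← Matrix.cramer_apply, Matrix.cramer_eq_adjugate_mulVec, Matrix.mulVec, dotProduct]
    exact Finset.sum_congr rfl fun i _ => by ring
  simp_rw [h1, add_mul, Finset.sum_add_distrib, add_mul]
  congr 1
  · rw [Finset.sum_mul]
    refine Finset.sum_congr rfl fun j _ => ?_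
    rw [← Finset.mul_sum, ← Matrix.det_eq_sum_mul_adjugate_col]
  · rw [Finset.sum_comm, Finset.sum_mul]
    refine Finset.sum_congr rfl fun j _ => ?_
    rw [← Finset.mul_sum, ← Matrix.det_eq_sum_mul_adjugate_row]

theorem JT_euler {R : Type*} [CommRing R] (h : ℤ → R) (a b : R)
    (hh : ∀ k : ℤ, (k : R) * h k = a * h (k - 1) + b * h (k - 2)) (N : ℕ) (m : ℕ → ℤ) :
    ((∑ j ∈ Finset.range N, (m j + j) : ℤ) : R) * JT h N m =
      ∑ j ∈ Finset.range N, (a * JT h N (Function.update m j (m j - 1))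
        + b * JT h N (Function.update m j (m j - 2))) := by
  rw [Finset.sum_range, Finset.sum_range]
  have := det_weight (Matrix.of fun i j : Fin N => h (m j + (i : ℕ)))
    (fun j => ((m j : ℤ) : R)) (fun i => ((i : ℕ) : R))
  push_cast
  rw [JT, ← this]
  refine Finset.sum_congr rfl fun j _ => ?_
  rw [JT_update, JT_update, ← Matrix.det_updateCol_smul, ← Matrix.det_updateCol_smul,
    ← Matrix.det_updateCol_add]
  congr 2
  funext i
  have := hh (m j + (i : ℕ))
  push_cast at this
  simp only [Matrix.of_apply, this, Pi.add_apply, Pi.smul_apply, smul_eq_mul]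
  congr 3 <;> ring

theorem JT_eq_zero {R : Type*} [CommRing R] (h : ℤ → R) (N : ℕ) (m : ℕ → ℤ) (j k : ℕ)
    (hj : j < N) (hk : k < N) (hjk : j ≠ k) (hm : m j = m k) : JT h N m = 0 := by
  refine Matrix.det_zero_of_column_eq (i := ⟨j, hj⟩) (j := ⟨k, hk⟩) ?_ ?_
  · simpa using hjk
  · intro i; simp [hm]

theorem JT_eq_zero_of_neg {R : Type*} [CommRing R] (h : ℤ → R) (hneg : ∀ k < 0, h k = 0)
    (N : ℕ) (m : ℕ → ℤ) (j : ℕ) (hj : j < N) (hm : m j ≤ - N) : JT h N m = 0 := by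
  refine Matrix.det_eq_zero_of_column_eq_zero ⟨j, hj⟩ ?_
  intro i
  have := i.2
  simp only [Matrix.of_apply]
  exact hneg _ (by omega)

theorem JT_swap {R : Type*} [CommRing R] (h : ℤ → R) (N : ℕ) (m : ℕ → ℤ) (j k : ℕ)
    (hj : j < N) (hk : k < N) (hjk : j ≠ k) :
    JT h N (fun x => m (Equiv.swap j k x)) = - JT h N m := by
  have h1 := Matrix.det_permute' (Equiv.swap (⟨j, hj⟩ : Fin N) ⟨k, hk⟩)
    (Matrix.of fun i j : Fin N => h (m j + (i : ℕ)))
  rw [Equiv.Perm.sign_swap (by simpa using hjk)] at h1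
  unfold JT
  simp only [Units.val_neg, Units.val_one, Int.cast_neg, Int.cast_one, neg_mul, one_mul] at h1
  rw [← h1]
  congr 1
  ext i x
  simp only [Matrix.of_apply, Matrix.submatrix_apply, id]
  congr 3
  simp only [Equiv.swap_apply_def, Fin.ext_iff]
  split_ifs <;> rfl

theorem JT_succ {R : Type*} [CommRing R] (h : ℤ → R) (h0 : h 0 = 1) (hneg : ∀ k < 0, h k = 0)
    (N : ℕ) (m : ℕ → ℤ) (hm : m N = - N) : JT h (N + 1) m = JT h N m := by
  unfold JT
  rw [Matrix.det_succ_column _ (Fin.last N), Fin.sum_univ_castSucc, Finset.sum_eq_zero]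
  · simp only [Matrix.of_apply, Fin.val_last, hm]
    simp only [neg_add_cancel, h0, zero_add]
    rw [Even.neg_one_pow ⟨N, rfl⟩, one_mul, one_mul]
    congr 1
    ext i k
    simp [Fin.succAbove_last]
  · intro i _
    have := i.2
    simp only [Matrix.of_apply, Fin.val_last, hm]
    rw [hneg _ (by simp)]
    simp

theorem lt_nrows_iff (μ : YoungDiagram) (j : ℕ) : j < nrows μ ↔ 0 < μ.rowLen j := by
  unfold nrows
  rw [← YoungDiagram.mem_iff_lt_colLen, YoungDiagram.mem_iff_lt_rowLen]

theorem JT_stable {R : Type*} [CommRing R] (h : ℤ → R) (h0 : h 0 = 1)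
    (hneg : ∀ k < 0, h k = 0) (μ : YoungDiagram) (N : ℕ) (hN : nrows μ ≤ N) :
    JT h N (fun j => (μ.rowLen j : ℤ) - j) = SchurJT h μ := by
  induction N, hN using Nat.le_induction with
  | base => rfl
  | succ N hN ih =>
    rw [JT_succ h h0 hneg, ih]
    have := (lt_nrows_iff μ N).not.1 (by omega)
    have h2 : μ.rowLen N = 0 := by omega
    simp [h2]

theorem card_eq_sum (μ : YoungDiagram) (N : ℕ) (hN : nrows μ ≤ N) :
    μ.card = ∑ j ∈ Finset.range N, μ.rowLen j := by
  unfold YoungDiagram.card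
  rw [Finset.card_eq_sum_card_fiberwise (f := Prod.fst) (t := Finset.range N)]
  · refine Finset.sum_congr rfl fun j _ => ?_
    rw [YoungDiagram.rowLen_eq_card]; rfl
  · rintro ⟨a, b⟩ hc
    have hc : (a, b) ∈ μ := by simpa using hc
    rw [YoungDiagram.mem_iff_lt_rowLen] at hc
    have := (lt_nrows_iff μ a).2 (by omega)
    simp; omega

/-! ### Removing boxes and dominoes -/

/-- The part of `lam` lying within rows of length `f`. -/
def trim (lam : YoungDiagram) (f : ℕ → ℕ) : YoungDiagram where
  cells := lam.cells.filter (fun c => ∀ i ≤ c.1, c.2 < f i)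
  isLowerSet := by
    rintro ⟨a, b⟩ ⟨c, d⟩ hle hab
    have h1 : c ≤ a := hle.1
    have h2 : d ≤ b := hle.2
    simp only [Finset.coe_filter, YoungDiagram.mem_cells, Set.mem_ofPred_eq] at hab ⊢
    exact ⟨lam.up_left_mem h1 h2 hab.1, fun i hi => lt_of_le_of_lt h2 (hab.2 i (hi.trans h1))⟩

theorem rowLen_ext {μ ν : YoungDiagram} (h : ∀ j, μ.rowLen j = ν.rowLen j) : μ = ν := by
  ext ⟨a, b⟩
  simp only [YoungDiagram.mem_cells, YoungDiagram.mem_iff_lt_rowLen, h]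

theorem rowLen_le_of_le {μ ν : YoungDiagram} (h : μ ≤ ν) (j : ℕ) : μ.rowLen j ≤ ν.rowLen j := by
  by_contra hc
  have h1 : (j, ν.rowLen j) ∈ μ := YoungDiagram.mem_iff_lt_rowLen.2 (by omega)
  have h2 := YoungDiagram.mem_iff_lt_rowLen.1 (h h1)
  omega

theorem le_of_rowLen_le {μ ν : YoungDiagram} (h : ∀ j, μ.rowLen j ≤ ν.rowLen j) : μ ≤ ν := by
  rintro ⟨a, b⟩ hc
  have hc : (a, b) ∈ μ := hc
  have := h a
  rw [YoungDiagram.mem_iff_lt_rowLen] at hc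
  exact (YoungDiagram.mem_iff_lt_rowLen (μ := ν)).2 (by omega)

theorem nrows_le_of_le {μ ν : YoungDiagram} (h : μ ≤ ν) : nrows μ ≤ nrows ν := by
  by_contra hc
  have h1 := (lt_nrows_iff μ (nrows ν)).1 (by omega)
  have h2 := (lt_nrows_iff ν (nrows ν)).not.1 (by omega)
  have := rowLen_le_of_le h (nrows ν)
  omega

theorem rowLen_trim (lam : YoungDiagram) (f : ℕ → ℕ) (hf : ∀ i, f (i + 1) ≤ f i)
    (hle : ∀ i, f i ≤ lam.rowLen i) (j : ℕ) : (trim lam f).rowLen j = f j := by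
  have hanti : Antitone f := antitone_nat_of_succ_le hf
  have key : ∀ x, x < (trim lam f).rowLen j ↔ x < f j := by
    intro x
    rw [← YoungDiagram.mem_iff_lt_rowLen, ← YoungDiagram.mem_cells]
    simp only [trim, Finset.mem_filter, YoungDiagram.mem_cells, YoungDiagram.mem_iff_lt_rowLen]
    constructor
    · rintro ⟨_, h⟩; exact h j le_rfl
    · intro h
      exact ⟨lt_of_lt_of_le h (hle j), fun i hi => lt_of_lt_of_le h (hanti hi)⟩
  have h1 := key (f j)
  have h2 := key ((trim lam f).rowLen j)
  omega

/-- Row lengths after removing a box of row `j`. -/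
def fB (lam : YoungDiagram) (j : ℕ) : ℕ → ℕ := fun k => if k = j then lam.rowLen j - 1 else lam.rowLen k
/-- Row lengths after removing a horizontal domino of row `j`. -/
def fH (lam : YoungDiagram) (j : ℕ) : ℕ → ℕ := fun k => if k = j then lam.rowLen j - 2 else lam.rowLen k
/-- Row lengths after removing a vertical domino of rows `j`, `j + 1`. -/
def fV (lam : YoungDiagram) (j : ℕ) : ℕ → ℕ :=
  fun k => if k = j ∨ k = j + 1 then lam.rowLen k - 1 else lam.rowLen k

/-- Rows with a removable box. -/
def rB (lam : YoungDiagram) : Finset ℕ :=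
  (Finset.range (nrows lam)).filter fun j => lam.rowLen (j + 1) + 1 ≤ lam.rowLen j
/-- Rows with a removable horizontal domino. -/
def rH (lam : YoungDiagram) : Finset ℕ :=
  (Finset.range (nrows lam)).filter fun j => lam.rowLen (j + 1) + 2 ≤ lam.rowLen j
/-- Rows with a removable vertical domino. -/
def rV (lam : YoungDiagram) : Finset ℕ :=
  (Finset.range (nrows lam)).filter fun j => lam.rowLen (j + 1) = lam.rowLen j ∧
    lam.rowLen (j + 2) + 1 ≤ lam.rowLen (j + 1)

theorem mem_rB {lam : YoungDiagram} {j : ℕ} :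
    j ∈ rB lam ↔ lam.rowLen (j + 1) + 1 ≤ lam.rowLen j := by
  simp only [rB, Finset.mem_filter, Finset.mem_range, lt_nrows_iff]; omega

theorem mem_rH {lam : YoungDiagram} {j : ℕ} :
    j ∈ rH lam ↔ lam.rowLen (j + 1) + 2 ≤ lam.rowLen j := by
  simp only [rH, Finset.mem_filter, Finset.mem_range, lt_nrows_iff]; omega

theorem mem_rV {lam : YoungDiagram} {j : ℕ} :
    j ∈ rV lam ↔ lam.rowLen (j + 1) = lam.rowLen j ∧
    lam.rowLen (j + 2) + 1 ≤ lam.rowLen (j + 1) := by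
  simp only [rV, Finset.mem_filter, Finset.mem_range, lt_nrows_iff]; omega

theorem rowLen_fB {lam : YoungDiagram} {j : ℕ} (hj : j ∈ rB lam) (k : ℕ) :
    (trim lam (fB lam j)).rowLen k = fB lam j k := by
  rw [mem_rB] at hj
  apply rowLen_trim
  · intro i
    have := lam.rowLen_anti i (i + 1) (by omega)
    unfold fB
    split_ifs with h1 h2 h2 <;> first | omega | (subst h1; omega) | (subst h2; omega)
  · intro i
    unfold fB
    split_ifs with h1
    · subst h1; omega
    · omega

theorem rowLen_fH {lam : YoungDiagram} {j : ℕ} (hj : j ∈ rH lam) (k : ℕ) :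
    (trim lam (fH lam j)).rowLen k = fH lam j k := by
  rw [mem_rH] at hj
  apply rowLen_trim
  · intro i
    have := lam.rowLen_anti i (i + 1) (by omega)
    unfold fH
    split_ifs with h1 h2 h2 <;> first | omega | (subst h1; omega) | (subst h2; omega)
  · intro i
    unfold fH
    split_ifs with h1
    · subst h1; omega
    · omega

theorem rowLen_fV {lam : YoungDiagram} {j : ℕ} (hj : j ∈ rV lam) (k : ℕ) :
    (trim lam (fV lam j)).rowLen k = fV lam j k := by
  rw [mem_rV] at hj
  apply rowLen_trim
  · intro i
    have := lam.rowLen_anti i (i + 1) (by omega)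
    unfold fV
    split_ifs with h1 h2 h2
    · omega
    · have : i + 1 = j := by omega
      subst this; omega
    · have : i = j + 1 := by omega
      subst this
      have : lam.rowLen (j + 1 + 1) = lam.rowLen (j + 2) := rfl
      omega
    · omega
  · intro i
    unfold fV
    split_ifs with h1 <;> omega

theorem addBox_iff (μ lam : YoungDiagram) : AddBox μ lam ↔
    ∃ j, lam.rowLen j = μ.rowLen j + 1 ∧ ∀ k ≠ j, lam.rowLen k = μ.rowLen k := by
  constructor
  · rintro ⟨hle, hc⟩
    have hs : μ.cells ⊆ lam.cells := YoungDiagram.cells_subset_iff.2 hle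
    have h1 : (lam.cells \ μ.cells).card = 1 := by
      rw [Finset.card_sdiff_of_subset hs]
      unfold YoungDiagram.card at hc; omega
    obtain ⟨⟨j, c⟩, hjc⟩ := Finset.card_eq_one.1 h1
    have key : ∀ k x, (x < lam.rowLen k ∧ ¬ x < μ.rowLen k) ↔ (k = j ∧ x = c) := by
      intro k x
      have := Finset.ext_iff.1 hjc (k, x)
      simpa only [Finset.mem_sdiff, YoungDiagram.mem_cells, YoungDiagram.mem_iff_lt_rowLen,
        Finset.mem_singleton, Prod.mk.injEq] using this
    refine ⟨j, ?_, fun k hk => ?_⟩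
    · have h1 := (key j c).2 ⟨rfl, rfl⟩
      have h2 := (key j (μ.rowLen j)).1
      have h3 := (key j (c + 1)).1
      have h4 := rowLen_le_of_le hle j
      by_contra hne
      have h5 := h2 (by omega)
      have h6 := h3 (by omega)
      omega
    · have h2 := (key k (μ.rowLen k)).1
      have h4 := rowLen_le_of_le hle k
      by_contra hne
      exact hk (h2 (by omega)).1
  · rintro ⟨j, h1, h2⟩
    have hle : μ ≤ lam := le_of_rowLen_le fun k => by
      by_cases hk : k = j
      · subst hk; omega
      · rw [h2 k hk]
    refine ⟨hle, ?_⟩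
    rw [card_eq_sum lam _ le_rfl, card_eq_sum μ _ (nrows_le_of_le hle)]
    have hj : j ∈ Finset.range (nrows lam) := by
      rw [Finset.mem_range, lt_nrows_iff]; omega
    rw [← Finset.add_sum_erase _ _ hj, ← Finset.add_sum_erase _ _ hj, h1]
    rw [Finset.sum_congr rfl fun k hk => h2 k (Finset.ne_of_mem_erase hk)]
    ring

theorem addDominoH_iff (μ lam : YoungDiagram) : AddDominoH μ lam ↔
    ∃ j, lam.rowLen j = μ.rowLen j + 2 ∧ ∀ k ≠ j, lam.rowLen k = μ.rowLen k := by
  constructor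
  · rintro ⟨hle, j, c, hjc⟩
    have key : ∀ k x, (x < lam.rowLen k ∧ ¬ x < μ.rowLen k) ↔
        (k = j ∧ x = c ∨ k = j ∧ x = c + 1) := by
      intro k x
      have := Finset.ext_iff.1 hjc (k, x)
      simpa only [Finset.mem_sdiff, YoungDiagram.mem_cells, YoungDiagram.mem_iff_lt_rowLen,
        Finset.mem_singleton, Finset.mem_insert, Prod.mk.injEq] using this
    refine ⟨j, ?_, fun k hk => ?_⟩
    · have h1 := (key j c).2 (by simp)
      have h1' := (key j (c + 1)).2 (by simp)
      have h2 := (key j (μ.rowLen j)).1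
      have h3 := (key j (c + 2)).1
      have h4 := rowLen_le_of_le hle j
      have h5 := h2 (by omega)
      by_contra hne
      have h6 := h3 (by omega)
      omega
    · have h2 := (key k (μ.rowLen k)).1
      have h4 := rowLen_le_of_le hle k
      by_contra hne
      have := h2 (by omega)
      omega
  · rintro ⟨j, h1, h2⟩
    have hle : μ ≤ lam := le_of_rowLen_le fun k => by
      by_cases hk : k = j
      · subst hk; omega
      · rw [h2 k hk]
    refine ⟨hle, j, μ.rowLen j, ?_⟩
    ext ⟨k, x⟩
    simp only [Finset.mem_sdiff, YoungDiagram.mem_cells, YoungDiagram.mem_iff_lt_rowLen,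
        Finset.mem_singleton, Finset.mem_insert, Prod.mk.injEq]
    by_cases hk : k = j
    · subst hk; omega
    · have := h2 k hk; omega

theorem addDominoV_iff (μ lam : YoungDiagram) : AddDominoV μ lam ↔
    ∃ j, lam.rowLen j = lam.rowLen (j + 1) ∧ lam.rowLen j = μ.rowLen j + 1 ∧
      lam.rowLen (j + 1) = μ.rowLen (j + 1) + 1 ∧
      ∀ k, k ≠ j → k ≠ j + 1 → lam.rowLen k = μ.rowLen k := by
  constructor
  · rintro ⟨hle, j, c, hjc⟩
    have key : ∀ k x, (x < lam.rowLen k ∧ ¬ x < μ.rowLen k) ↔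
        (k = j ∧ x = c ∨ k = j + 1 ∧ x = c) := by
      intro k x
      have := Finset.ext_iff.1 hjc (k, x)
      simpa only [Finset.mem_sdiff, YoungDiagram.mem_cells, YoungDiagram.mem_iff_lt_rowLen,
        Finset.mem_singleton, Finset.mem_insert, Prod.mk.injEq] using this
    have row : ∀ k, k = j ∨ k = j + 1 → μ.rowLen k = c ∧ lam.rowLen k = c + 1 := by
      intro k hk
      have h1 := (key k c).2 (by omega)
      have h2 := (key k (μ.rowLen k)).1
      have h3 := (key k (c + 1)).1
      have h4 := rowLen_le_of_le hle k
      have h5 := h2 (by omega)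
      by_contra hne
      have h6 := h3 (by omega)
      omega
    have r1 := row j (by simp)
    have r2 := row (j + 1) (by simp)
    refine ⟨j, by omega, by omega, by omega, fun k hk hk' => ?_⟩
    have h2 := (key k (μ.rowLen k)).1
    have h4 := rowLen_le_of_le hle k
    by_contra hne
    have := h2 (by omega)
    omega
  · rintro ⟨j, h0, h1, h1', h2⟩
    have hle : μ ≤ lam := le_of_rowLen_le fun k => by
      by_cases hk : k = j
      · subst hk; omega
      · by_cases hk' : k = j + 1
        · subst hk'; omega
        · rw [h2 k hk hk']
    refine ⟨hle, j, μ.rowLen j, ?_⟩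
    ext ⟨k, x⟩
    simp only [Finset.mem_sdiff, YoungDiagram.mem_cells, YoungDiagram.mem_iff_lt_rowLen,
        Finset.mem_singleton, Finset.mem_insert, Prod.mk.injEq]
    by_cases hk : k = j
    · subst hk; omega
    · by_cases hk' : k = j + 1
      · subst hk'; omega
      · have := h2 k hk hk'; omega

theorem bijB (lam : YoungDiagram) :
    Set.BijOn (fun j => trim lam (fB lam j)) (rB lam) {μ | AddBox μ lam} := by
  refine ⟨fun j hj => ?_, fun j hj k hk hjk => ?_, fun μ hμ => ?_⟩
  · rw [Set.mem_ofPred_eq, addBox_iff]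
    have hj' := mem_rB.1 hj
    refine ⟨j, ?_, fun k hk => ?_⟩
    · rw [rowLen_fB hj]; simp only [fB, if_true]; omega
    · rw [rowLen_fB hj]; simp [fB, hk]
  · have h := congrArg (fun ν => YoungDiagram.rowLen ν j) hjk
    simp only [rowLen_fB hj, rowLen_fB hk, fB] at h
    have hj' := mem_rB.1 hj
    by_contra hne
    simp only [if_true, if_neg hne] at h
    omega
  · rw [Set.mem_ofPred_eq, addBox_iff] at hμ
    obtain ⟨j, h1, h2⟩ := hμ
    have hj : j ∈ rB lam := by
      rw [mem_rB, h1, h2 (j + 1) (by omega)]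
      have := μ.rowLen_anti j (j + 1) (by omega); omega
    refine ⟨j, hj, rowLen_ext fun k => ?_⟩
    rw [rowLen_fB hj]
    by_cases hk : k = j
    · subst hk; simp [fB, h1]
    · simp [fB, hk, h2]

theorem bijH (lam : YoungDiagram) :
    Set.BijOn (fun j => trim lam (fH lam j)) (rH lam) {μ | AddDominoH μ lam} := by
  refine ⟨fun j hj => ?_, fun j hj k hk hjk => ?_, fun μ hμ => ?_⟩
  · rw [Set.mem_ofPred_eq, addDominoH_iff]
    have hj' := mem_rH.1 hj
    refine ⟨j, ?_, fun k hk => ?_⟩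
    · rw [rowLen_fH hj]; simp only [fH, if_true]; omega
    · rw [rowLen_fH hj]; simp [fH, hk]
  · have h := congrArg (fun ν => YoungDiagram.rowLen ν j) hjk
    simp only [rowLen_fH hj, rowLen_fH hk, fH] at h
    have hj' := mem_rH.1 hj
    by_contra hne
    simp only [if_true, if_neg hne] at h
    omega
  · rw [Set.mem_ofPred_eq, addDominoH_iff] at hμ
    obtain ⟨j, h1, h2⟩ := hμ
    have hj : j ∈ rH lam := by
      rw [mem_rH, h1, h2 (j + 1) (by omega)]
      have := μ.rowLen_anti j (j + 1) (by omega); omega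
    refine ⟨j, hj, rowLen_ext fun k => ?_⟩
    rw [rowLen_fH hj]
    by_cases hk : k = j
    · subst hk; simp [fH, h1]
    · simp [fH, hk, h2]

theorem bijV (lam : YoungDiagram) :
    Set.BijOn (fun j => trim lam (fV lam j)) (rV lam) {μ | AddDominoV μ lam} := by
  refine ⟨fun j hj => ?_, fun j hj k hk hjk => ?_, fun μ hμ => ?_⟩
  · rw [Set.mem_ofPred_eq, addDominoV_iff]
    have hj' := mem_rV.1 hj
    refine ⟨j, hj'.1.symm, ?_, ?_, fun k hk hk' => ?_⟩
    · rw [rowLen_fV hj]; simp only [fV, true_or, if_true]; omega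
    · rw [rowLen_fV hj]; simp only [fV, or_true, if_true]; omega
    · rw [rowLen_fV hj]; simp [fV, hk, hk']
  · have h := congrArg (fun ν => YoungDiagram.rowLen ν j) hjk
    simp only [rowLen_fV hj, rowLen_fV hk, fV, true_or, if_true] at h
    have hj' := mem_rV.1 hj
    have hk' := mem_rV.1 hk
    by_contra hne
    by_cases h1 : j = k + 1
    · subst h1
      have : lam.rowLen (k + 1 + 1) = lam.rowLen (k + 2) := rfl
      omega
    · rw [if_neg (by omega)] at h
      omega
  · rw [Set.mem_ofPred_eq, addDominoV_iff] at hμ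
    obtain ⟨j, h0, h1, h1', h2⟩ := hμ
    have hj : j ∈ rV lam := by
      rw [mem_rV, h1, h1', h2 (j + 2) (by omega) (by omega)]
      have := μ.rowLen_anti (j + 1) (j + 2) (by omega); omega
    refine ⟨j, hj, rowLen_ext fun k => ?_⟩
    rw [rowLen_fV hj]
    by_cases hk : k = j
    · subst hk; simp [fV, h1]
    · by_cases hk' : k = j + 1
      · subst hk'; simp [fV, h1']
      · simp [fV, hk, hk', h2]

theorem card_of_dominoH {μ lam : YoungDiagram} (h : AddDominoH μ lam) :
    lam.card = μ.card + 2 := by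
  obtain ⟨hle, i, j, hc⟩ := h
  have := Finset.card_sdiff_add_card_eq_card (YoungDiagram.cells_subset_iff.2 hle)
  rw [hc, Finset.card_pair (by simp)] at this
  unfold YoungDiagram.card; omega

theorem card_of_dominoV {μ lam : YoungDiagram} (h : AddDominoV μ lam) :
    lam.card = μ.card + 2 := by
  obtain ⟨hle, i, j, hc⟩ := h
  have := Finset.card_sdiff_add_card_eq_card (YoungDiagram.cells_subset_iff.2 hle)
  rw [hc, Finset.card_pair (by simp)] at this
  unfold YoungDiagram.card; omega

/-- The Murnaghan–Nakayama/Euler type identity. -/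
theorem SchurJT_euler {R : Type*} [CommRing R] (h : ℤ → R) (h0 : h 0 = 1)
    (hneg : ∀ k < 0, h k = 0) (a b : R)
    (hh : ∀ k : ℤ, (k : R) * h k = a * h (k - 1) + b * h (k - 2)) (lam : YoungDiagram) :
    (lam.card : R) * SchurJT h lam =
      a * ∑ j ∈ rB lam, SchurJT h (trim lam (fB lam j)) +
      b * (∑ j ∈ rH lam, SchurJT h (trim lam (fH lam j))
        - ∑ j ∈ rV lam, SchurJT h (trim lam (fV lam j))) := by
  have e := JT_euler h a b hh (nrows lam) (fun j => (lam.rowLen j : ℤ) - j)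
  have hcard : ((∑ j ∈ Finset.range (nrows lam), ((lam.rowLen j : ℤ) - j + j) : ℤ) : R)
      = (lam.card : R) := by
    rw [card_eq_sum lam _ le_rfl]; push_cast; simp
  rw [hcard, Finset.sum_add_distrib, ← Finset.mul_sum, ← Finset.mul_sum] at e
  change _ * JT h _ _ = _
  rw [e]
  have trimle : ∀ f, nrows (trim lam f) ≤ nrows lam := fun f =>
    nrows_le_of_le (YoungDiagram.cells_subset_iff.1 (Finset.filter_subset _ _))
  congr 2
  · rw [rB, Finset.sum_filter]
    refine Finset.sum_congr rfl fun j hj => ?_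
    have hj0 := Finset.mem_range.1 hj
    have hjp := (lt_nrows_iff lam j).1 hj0
    split_ifs with hc
    · have hj' : j ∈ rB lam := mem_rB.2 hc
      change _ = SchurJT h _
      rw [← JT_stable h h0 hneg _ _ (trimle _)]
      apply JT_congr
      intro k _
      simp only [rowLen_fB hj', fB]
      by_cases hk : k = j
      · subst hk; simp; omega
      · simp [hk]
    · have hanti := lam.rowLen_anti j (j + 1) (by omega)
      have hj1 : j + 1 < nrows lam := by rw [lt_nrows_iff]; omega
      apply JT_eq_zero _ _ _ j (j + 1) hj0 hj1 (by omega)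
      rw [Function.update_self, Function.update_of_ne (by omega)]
      push_cast; omega
  · rw [rH, rV, Finset.sum_filter, Finset.sum_filter, ← Finset.sum_sub_distrib]
    refine Finset.sum_congr rfl fun j hj => ?_
    have hj0 := Finset.mem_range.1 hj
    have hjp := (lt_nrows_iff lam j).1 hj0
    have hanti := lam.rowLen_anti j (j + 1) (by omega)
    have hanti2 := lam.rowLen_anti (j + 1) (j + 2) (by omega)
    split_ifs with hc hv hv
    · omega
    · have hj' : j ∈ rH lam := mem_rH.2 hc
      change _ = SchurJT h _ - 0
      rw [← JT_stable h h0 hneg _ _ (trimle _), sub_zero]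
      apply JT_congr
      intro k _
      simp only [rowLen_fH hj', fH]
      by_cases hk : k = j
      · subst hk; simp; omega
      · simp [hk]
    · have hj' : j ∈ rV lam := mem_rV.2 hv
      have hj1 : j + 1 < nrows lam := by rw [lt_nrows_iff]; omega
      change _ = 0 - SchurJT h _
      rw [← JT_stable h h0 hneg _ _ (trimle _), zero_sub,
        ← JT_swap h _ _ j (j + 1) hj0 hj1 (by omega)]
      apply JT_congr
      intro k _
      by_cases hk : k = j
      · subst hk
        rw [Equiv.swap_apply_left, rowLen_fV hj']
        simp [fV]; omega
      · by_cases hk' : k = j + 1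
        · subst hk'
          rw [Equiv.swap_apply_right, rowLen_fV hj']
          simp [fV]; omega
        · rw [Equiv.swap_apply_of_ne_of_ne hk hk', rowLen_fV hj']
          simp [fV, hk, hk']
    · rw [sub_zero]
      by_cases h1 : lam.rowLen (j + 1) = lam.rowLen j
      · have hj2 : j + 2 < nrows lam := by rw [lt_nrows_iff]; omega
        apply JT_eq_zero _ _ _ j (j + 2) hj0 hj2 (by omega)
        rw [Function.update_self, Function.update_of_ne (by omega)]
        push_cast; omega
      · by_cases hj1 : j + 1 < nrows lam
        · apply JT_eq_zero _ _ _ j (j + 1) hj0 hj1 (by omega)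
          rw [Function.update_self, Function.update_of_ne (by omega)]
          push_cast; omega
        · apply JT_eq_zero_of_neg h hneg _ _ j hj0
          have := (lt_nrows_iff lam (j + 1)).not.1 hj1
          rw [Function.update_self]
          omega

/-! ### Standard Young tableaux -/

/-- Standard Young tableaux as functions on the plane. -/
def SYTSet (μ : YoungDiagram) : Set (ℕ × ℕ → ℕ) :=
  {f | (∀ c, c ∉ μ → f c = 0) ∧ (∀ c, c ∈ μ → f c < μ.card) ∧
    (∀ c d, c ∈ μ → d ∈ μ → f c = f d → c = d) ∧
    ∀ a b : ℕ × ℕ, a ∈ μ → b ∈ μ → a.1 ≤ b.1 → a.2 ≤ b.2 → f a ≤ f b}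

open Classical in
theorem SYTCount_eq (μ : YoungDiagram) : SYTCount μ = Nat.card (SYTSet μ) := by
  unfold SYTCount
  refine Nat.card_congr (Equiv.ofBijective (fun T => ⟨fun c =>
    if h : c ∈ μ.cells then (T.1 ⟨c, h⟩ : ℕ) else 0, ?_, ?_, ?_, ?_⟩) ⟨?_, ?_⟩)
  · intro c hc
    beta_reduce
    rw [dif_neg (by simpa using hc)]
  · intro c hc
    beta_reduce
    rw [dif_pos (by simpa using hc)]
    exact (T.1 _).2
  · intro c d hc hd hcd
    beta_reduce at hcd
    rw [dif_pos (by simpa using hc), dif_pos (by simpa using hd)] at hcd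
    simpa using T.1.injective (Fin.ext hcd)
  · intro a b ha hb h1 h2
    beta_reduce
    rw [dif_pos (by simpa using ha), dif_pos (by simpa using hb)]
    exact T.2 _ _ h1 h2
  · intro T T' h
    have h := congrArg Subtype.val h
    apply Subtype.ext
    ext c
    have := congrFun h c.1
    simp only [dif_pos c.2] at this
    exact this
  · rintro ⟨f, h1, h2, h3, h4⟩
    let g : μ.cells → Fin μ.card := fun c => ⟨f c, h2 c (by simpa using c.2)⟩
    have hg : Function.Injective g := by
      intro c d hcd
      apply Subtype.ext
      exact h3 _ _ (by simpa using c.2) (by simpa using d.2) (congrArg Fin.val hcd)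
    have hb : Function.Bijective g :=
      (Fintype.bijective_iff_injective_and_card g).2 ⟨hg, by simp [YoungDiagram.card]⟩
    refine ⟨⟨Equiv.ofBijective g hb, fun a b hab1 hab2 => ?_⟩, ?_⟩
    · exact h4 _ _ (by simpa using a.2) (by simpa using b.2) hab1 hab2
    · apply Subtype.ext
      funext c
      by_cases hc : c ∈ μ.cells
      · simp only [dif_pos hc]; rfl
      · simp only [dif_neg hc]
        exact (h1 c (by simpa using hc)).symm

theorem SYTSet_finite (μ : YoungDiagram) : Finite (SYTSet μ) := by
  refine Finite.of_injective (β := μ.cells → Fin μ.card)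
    (fun f c => ⟨f.1 c, f.2.2.1 c (by simpa using c.2)⟩) ?_
  intro f g hfg
  apply Subtype.ext
  funext c
  by_cases hc : c ∈ μ
  · have := congrFun hfg ⟨c, by simpa using hc⟩
    exact congrArg Fin.val this
  · rw [f.2.1 c hc, g.2.1 c hc]

/-- The corner of row `j`. -/
def corner (lam : YoungDiagram) (j : ℕ) : ℕ × ℕ := (j, lam.rowLen j - 1)

theorem mem_trim_fB {lam : YoungDiagram} {j : ℕ} (hj : j ∈ rB lam) (c : ℕ × ℕ) :
    c ∈ trim lam (fB lam j) ↔ c ∈ lam ∧ c ≠ corner lam j := by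
  obtain ⟨a, b⟩ := c
  have hj' := mem_rB.1 hj
  simp only [YoungDiagram.mem_iff_lt_rowLen, rowLen_fB hj, fB, corner, ne_eq, Prod.mk.injEq]
  by_cases h : a = j
  · subst h; simp; omega
  · simp [h]

theorem corner_mem {lam : YoungDiagram} {j : ℕ} (hj : j ∈ rB lam) : corner lam j ∈ lam := by
  have hj' := mem_rB.1 hj
  unfold corner
  rw [YoungDiagram.mem_iff_lt_rowLen]; omega

theorem corner_max {lam : YoungDiagram} {j : ℕ} (hj : j ∈ rB lam) (c : ℕ × ℕ) (hc : c ∈ lam)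
    (h1 : j ≤ c.1) (h2 : lam.rowLen j - 1 ≤ c.2) : c = corner lam j := by
  obtain ⟨a, b⟩ := c
  have hj' := mem_rB.1 hj
  simp only at h1 h2
  rw [YoungDiagram.mem_iff_lt_rowLen] at hc
  have : a = j := by
    by_contra hne
    have := lam.rowLen_anti (j + 1) a (by omega)
    omega
  subst this
  simp only [corner, Prod.mk.injEq, true_and]; omega

theorem card_trim_fB {lam : YoungDiagram} {j : ℕ} (hj : j ∈ rB lam) :
    lam.card = (trim lam (fB lam j)).card + 1 := ((bijB lam).1 hj).2

/-- Adding the maximal entry to a tableau. -/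
noncomputable def extTab (lam : YoungDiagram) (j : ℕ) (g : ℕ × ℕ → ℕ) : ℕ × ℕ → ℕ :=
  Function.update g (corner lam j) (lam.card - 1)

theorem extTab_mem {lam : YoungDiagram} {j : ℕ} (hj : j ∈ rB lam) (g : ℕ × ℕ → ℕ)
    (hg : g ∈ SYTSet (trim lam (fB lam j))) : extTab lam j g ∈ SYTSet lam := by
  obtain ⟨h1, h2, h3, h4⟩ := hg
  have hcard := card_trim_fB hj
  have hlt : ∀ c, c ∈ lam → c ≠ corner lam j → g c < lam.card - 1 := by
    intro c hc hne
    have := h2 c ((mem_trim_fB hj c).2 ⟨hc, hne⟩)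
    omega
  refine ⟨?_, ?_, ?_, ?_⟩
  · intro c hc
    have : c ≠ corner lam j := by rintro rfl; exact hc (corner_mem hj)
    rw [extTab, Function.update_of_ne this]
    exact h1 c (by rw [mem_trim_fB hj]; tauto)
  · intro c hc
    by_cases hcc : c = corner lam j
    · subst hcc; rw [extTab, Function.update_self]; omega
    · rw [extTab, Function.update_of_ne hcc]
      have := hlt c hc hcc; omega
  · intro c d hc hd hcd
    by_cases hcc : c = corner lam j <;> by_cases hdd : d = corner lam j
    · rw [hcc, hdd]
    · rw [extTab, Function.update_of_ne hdd, hcc, Function.update_self] at hcd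
      have := hlt d hd hdd; omega
    · rw [extTab, Function.update_of_ne hcc, hdd, Function.update_self] at hcd
      have := hlt c hc hcc; omega
    · rw [extTab, Function.update_of_ne hcc, Function.update_of_ne hdd] at hcd
      exact h3 c d ((mem_trim_fB hj c).2 ⟨hc, hcc⟩) ((mem_trim_fB hj d).2 ⟨hd, hdd⟩) hcd
  · intro a b ha hb hab1 hab2
    by_cases hcc : a = corner lam j <;> by_cases hdd : b = corner lam j
    · rw [hcc, hdd]
    · exfalso
      subst hcc
      exact hdd (corner_max hj b hb hab1 hab2)
    · rw [extTab, Function.update_of_ne hcc, hdd, Function.update_self]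
      exact (hlt a ha hcc).le
    · rw [extTab, Function.update_of_ne hcc, Function.update_of_ne hdd]
      exact h4 a b ((mem_trim_fB hj a).2 ⟨ha, hcc⟩) ((mem_trim_fB hj b).2 ⟨hb, hdd⟩) hab1 hab2

theorem SYTSet_exists_max {lam : YoungDiagram} (hlam : 0 < lam.card) {f : ℕ × ℕ → ℕ}
    (hf : f ∈ SYTSet lam) : ∃ c ∈ lam, f c = lam.card - 1 := by
  have himg : lam.cells.image f = Finset.range lam.card := by
    apply Finset.eq_of_subset_of_card_le
    · intro x hx
      obtain ⟨c, hc, rfl⟩ := Finset.mem_image.1 hx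
      exact Finset.mem_range.2 (hf.2.1 c (by simpa using hc))
    · rw [Finset.card_range, Finset.card_image_of_injOn]
      · intro c hc d hd hcd
        exact hf.2.2.1 c d (by simpa using hc) (by simpa using hd) hcd
  have : lam.card - 1 ∈ lam.cells.image f := by rw [himg, Finset.mem_range]; omega
  obtain ⟨c, hc, h⟩ := Finset.mem_image.1 this
  exact ⟨c, by simpa using hc, h⟩

theorem extTab_surj {lam : YoungDiagram} (hlam : 0 < lam.card) {f : ℕ × ℕ → ℕ}
    (hf : f ∈ SYTSet lam) :
    ∃ j ∈ rB lam, ∃ g ∈ SYTSet (trim lam (fB lam j)), extTab lam j g = f := by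
  obtain ⟨⟨j, x⟩, hc, hmax⟩ := SYTSet_exists_max hlam hf
  obtain ⟨h1, h2, h3, h4⟩ := hf
  have hno : ∀ d, d ∈ lam → j ≤ d.1 → x ≤ d.2 → d = (j, x) := by
    intro d hd hd1 hd2
    have := h4 (j, x) d hc hd hd1 hd2
    have := h2 d hd
    exact h3 d (j, x) hd hc (by omega)
  have hx := YoungDiagram.mem_iff_lt_rowLen.1 hc
  have hx1 : lam.rowLen j = x + 1 := by
    by_contra hne
    have := hno (j, x + 1) (YoungDiagram.mem_iff_lt_rowLen.2 (by omega)) (by simp) (by simp)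
    simp at this
  have hj : j ∈ rB lam := by
    rw [mem_rB]
    by_contra hne
    have := hno (j + 1, x) (YoungDiagram.mem_iff_lt_rowLen.2 (by omega)) (by simp) (by simp)
    simp at this
  have hcor : corner lam j = (j, x) := by simp [corner, hx1]
  have hcard := card_trim_fB hj
  refine ⟨j, hj, Function.update f (j, x) 0, ⟨?_, ?_, ?_, ?_⟩, ?_⟩
  · intro c hc
    rw [mem_trim_fB hj, hcor] at hc
    by_cases hcc : c = (j, x)
    · rw [hcc, Function.update_self]
    · rw [Function.update_of_ne hcc]
      exact h1 c (by tauto)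
  · intro c hcm
    rw [mem_trim_fB hj, hcor] at hcm
    rw [Function.update_of_ne hcm.2]
    have := h2 c hcm.1
    have : f c ≠ lam.card - 1 := fun he => hcm.2 (h3 c (j, x) hcm.1 hc (by omega))
    omega
  · intro c d hcm hdm hcd
    rw [mem_trim_fB hj, hcor] at hcm hdm
    rw [Function.update_of_ne hcm.2, Function.update_of_ne hdm.2] at hcd
    exact h3 c d hcm.1 hdm.1 hcd
  · intro c d hcm hdm hcd1 hcd2
    rw [mem_trim_fB hj, hcor] at hcm hdm
    rw [Function.update_of_ne hcm.2, Function.update_of_ne hdm.2]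
    exact h4 c d hcm.1 hdm.1 hcd1 hcd2
  · rw [extTab, hcor, Function.update_idem, ← hmax, Function.update_eq_self]

theorem SYTCount_rec (lam : YoungDiagram) (hlam : 0 < lam.card) :
    SYTCount lam = ∑ j ∈ rB lam, SYTCount (trim lam (fB lam j)) := by
  simp_rw [SYTCount_eq]
  rw [← Finset.sum_coe_sort]
  have := fun j : rB lam => SYTSet_finite (trim lam (fB lam j))
  rw [← Nat.card_sigma]
  refine (Nat.card_congr (Equiv.ofBijective
    (fun p : (Σ j : rB lam, SYTSet (trim lam (fB lam j))) =>
      (⟨extTab lam p.1 p.2, extTab_mem p.1.2 _ p.2.2⟩ : SYTSet lam)) ⟨?_, ?_⟩)).symm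
  · rintro ⟨⟨j, hj⟩, ⟨g, hg⟩⟩ ⟨⟨k, hk⟩, ⟨g', hg'⟩⟩ h
    have h : extTab lam j g = extTab lam k g' := congrArg Subtype.val h
    have hjk : j = k := by
      by_contra hne
      have hcc : corner lam j ≠ corner lam k := by simp [corner, hne]
      have h5 := congrFun h (corner lam j)
      rw [extTab, extTab, Function.update_self, Function.update_of_ne hcc] at h5
      have h6 : g' (corner lam j) < (trim lam (fB lam k)).card := hg'.2.1 (corner lam j) ((mem_trim_fB hk _).2 ⟨corner_mem hj, hcc⟩)
      have := card_trim_fB hk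
      omega
    subst hjk
    have : g = g' := by
      funext c
      by_cases hc : c = corner lam j
      · have hn : c ∉ trim lam (fB lam j) := by rw [mem_trim_fB hj]; tauto
        rw [hg.1 c hn, hg'.1 c hn]
      · have := congrFun h c
        rwa [extTab, extTab, Function.update_of_ne hc, Function.update_of_ne hc] at this
    subst this
    rfl
  · rintro ⟨f, hf⟩
    obtain ⟨j, hj, g, hg, h⟩ := extTab_surj hlam hf
    exact ⟨⟨⟨j, hj⟩, ⟨g, hg⟩⟩, Subtype.ext h⟩

/-- The sequence `1 / k!`. -/
noncomputable def hInv : ℤ → ℝ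
  | Int.ofNat n => 1 / (n.factorial : ℝ)
  | Int.negSucc _ => 0

theorem hInv_neg (k : ℤ) (hk : k < 0) : hInv k = 0 := by
  match k, hk with
  | Int.negSucc _, _ => rfl

theorem hInv_rec (k : ℤ) : (k : ℝ) * hInv k = 1 * hInv (k - 1) + 0 * hInv (k - 2) := by
  rw [zero_mul, add_zero, one_mul]
  match k with
  | Int.negSucc n => rw [hInv_neg _ (by omega), hInv_neg _ (by omega), mul_zero]
  | Int.ofNat 0 => rw [hInv_neg (Int.ofNat 0 - 1) (by decide)]; simp
  | Int.ofNat (n + 1) =>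
    have : Int.ofNat (n + 1) - 1 = Int.ofNat n := by simp
    rw [this]
    simp only [hInv, Nat.factorial_succ]
    have : (n.factorial : ℝ) ≠ 0 := by positivity
    push_cast
    field_simp
    simp

theorem SYTCount_formula (n : ℕ) : ∀ lam : YoungDiagram, lam.card = n →
    (SYTCount lam : ℝ) = (n.factorial : ℝ) * SchurJT hInv lam := by
  induction n with
  | zero =>
    intro lam h
    have hb : lam = ⊥ := by
      ext c
      have : lam.cells = ∅ := Finset.card_eq_zero.1 h
      simp [this]
    have hn : nrows lam = 0 := by
      by_contra hne
      have := (lt_nrows_iff lam 0).1 (by omega)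
      rw [← YoungDiagram.mem_iff_lt_rowLen, hb] at this
      exact YoungDiagram.notMem_bot _ this
    have h1 : SchurJT hInv lam = 1 := by
      unfold SchurJT JT
      have : IsEmpty (Fin (nrows lam)) := by rw [hn]; infer_instance
      exact Matrix.det_isEmpty
    have hm : ∀ c, c ∉ lam := fun c => by rw [hb]; exact YoungDiagram.notMem_bot c
    have h2 : SYTCount lam = 1 := by
      rw [SYTCount_eq, Nat.card_eq_one_iff_unique]
      refine ⟨⟨fun f g => Subtype.ext (funext fun c => ?_)⟩, ⟨⟨fun _ => 0, ?_⟩⟩⟩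
      · rw [f.2.1 c (hm c), g.2.1 c (hm c)]
      · exact ⟨fun _ _ => rfl, fun c hc => absurd hc (hm c), fun c _ hc => absurd hc (hm c),
          fun c _ hc => absurd hc (hm c)⟩
    rw [h1, h2]; simp
  | succ n ih =>
    intro lam h
    have e := SchurJT_euler hInv (by simp [hInv]) hInv_neg
      1 0 hInv_rec lam
    rw [zero_mul, add_zero, one_mul] at e
    rw [SYTCount_rec lam (by omega)]
    push_cast
    rw [Finset.sum_congr rfl fun j hj =>
      ih (trim lam (fB lam j)) (by have := card_trim_fB hj; omega)]
    rw [← Finset.mul_sum, ← e, h, Nat.factorial_succ]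
    push_cast
    ring

/-! ### Hermite polynomials -/

theorem He_succ_succ (n : ℕ) : He (n + 2) = X * He (n + 1) - C ((n : ℝ) + 1) * He n := rfl

theorem derivative_He (n : ℕ) : derivative (He (n + 1)) = C ((n : ℝ) + 1) * He n := by
  induction n using Nat.strong_induction_on with
  | _ n ih =>
    match n with
    | 0 => simp [He]
    | 1 =>
      have : He (1 + 1) = X * X - C 1 * 1 := by simp [He]
      rw [this]
      simp [He]
      ring
    | n + 2 =>
      have h1 := ih (n + 1) (by omega)
      have h2 := ih n (by omega)
      rw [He_succ_succ (n + 1)]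
      simp only [derivative_sub, derivative_mul, derivative_X, derivative_C, h1, h2]
      rw [He_succ_succ n]
      push_cast
      simp only [map_add, map_one, map_natCast, map_ofNat]
      ring

/-- The sequence `He_k / k!`. -/
noncomputable def hHe : ℤ → ℝ[X]
  | Int.ofNat n => C (1 / (n.factorial : ℝ)) * He n
  | Int.negSucc _ => 0

theorem hHe_neg (k : ℤ) (hk : k < 0) : hHe k = 0 := by
  match k, hk with
  | Int.negSucc _, _ => rfl

theorem hHe_zero : hHe 0 = 1 := by
  change C (1 / ((Nat.factorial 0 : ℕ) : ℝ)) * He 0 = 1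
  simp [He]

theorem hHe_rec (k : ℤ) : (k : ℝ[X]) * hHe k = X * hHe (k - 1) + (-1) * hHe (k - 2) := by
  match k with
  | Int.negSucc n =>
    rw [hHe_neg _ (by omega), hHe_neg _ (by omega), hHe_neg _ (by omega)]; simp
  | Int.ofNat 0 =>
    rw [hHe_neg (Int.ofNat 0 - 1) (by decide), hHe_neg (Int.ofNat 0 - 2) (by decide)]; simp
  | Int.ofNat 1 =>
    rw [hHe_neg (Int.ofNat 1 - 2) (by decide), show Int.ofNat 1 - 1 = 0 from rfl, hHe_zero]
    simp [hHe, He]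
  | Int.ofNat (n + 2) =>
    have e1 : Int.ofNat (n + 2) - 1 = Int.ofNat (n + 1) := by simp; omega
    have e2 : Int.ofNat (n + 2) - 2 = Int.ofNat n := by simp
    rw [e1, e2]
    simp only [hHe, He_succ_succ]
    have hf : (n.factorial : ℝ) ≠ 0 := by positivity
    have c1 : ((Int.ofNat (n + 2) : ℤ) : ℝ[X]) * C (1 / ((n + 2).factorial : ℝ))
        = C (1 / ((n + 1).factorial : ℝ)) := by
      rw [show ((Int.ofNat (n + 2) : ℤ) : ℝ[X]) = C ((n : ℝ) + 2) by
        simp only [map_add, map_natCast, map_ofNat]; simp, ← C_mul]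
      congr 1
      rw [Nat.factorial_succ (n + 1), Nat.factorial_succ n]
      push_cast
      field_simp
      ring
    have c2 : C (1 / ((n + 1).factorial : ℝ)) * C ((n : ℝ) + 1) = C (1 / (n.factorial : ℝ)) := by
      rw [← C_mul]
      congr 1
      rw [Nat.factorial_succ n]
      push_cast
      field_simp
    rw [← mul_assoc, c1, mul_sub, ← mul_assoc _ (C _) (He n), c2]
    ring

theorem iterate_derivative_He (n i : ℕ) :
    derivative^[i] (He n) = C (n.factorial : ℝ) * hHe ((n : ℤ) - i) := by
  induction i with
  | zero =>
    have : (n : ℤ) - (0 : ℕ) = Int.ofNat n := by simp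
    rw [this]
    simp only [Function.iterate_zero, id, hHe]
    rw [← mul_assoc, ← C_mul, mul_one_div_cancel (by positivity), C_1, one_mul]
  | succ i ih =>
    rw [Function.iterate_succ_apply', ih, derivative_mul, derivative_C, zero_mul, zero_add]
    congr 1
    rcases lt_or_ge n (i + 1) with h | h
    · rw [hHe_neg ((n : ℤ) - (i + 1 : ℕ)) (by omega)]
      rcases lt_or_ge n i with h' | h'
      · rw [hHe_neg ((n : ℤ) - i) (by omega)]; simp
      · have : (n : ℤ) - i = 0 := by omega
        rw [this, hHe_zero]; simp
    · obtain ⟨k, rfl⟩ := Nat.exists_eq_add_of_le h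
      have e1 : ((i + 1 + k : ℕ) : ℤ) - i = Int.ofNat (k + 1) := by simp; omega
      have e2 : ((i + 1 + k : ℕ) : ℤ) - (i + 1 : ℕ) = Int.ofNat k := by simp
      rw [e1, e2]
      simp only [hHe]
      rw [derivative_mul, derivative_C, zero_mul, zero_add, derivative_He, ← mul_assoc, ← C_mul]
      congr 2
      rw [Nat.factorial_succ]
      have hf : (k.factorial : ℝ) ≠ 0 := by positivity
      push_cast
      field_simp

theorem descFact_hInv (n i : ℕ) :
    (n.descFactorial i : ℝ) = (n.factorial : ℝ) * hInv ((n : ℤ) - i) := by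
  rcases lt_or_ge n i with h | h
  · rw [hInv_neg _ (by omega), Nat.descFactorial_of_lt h]; simp
  · have e : (n : ℤ) - i = Int.ofNat (n - i) := by simp; omega
    rw [e]
    simp only [hInv]
    rw [← Nat.factorial_mul_descFactorial h]
    have hf : ((n - i).factorial : ℝ) ≠ 0 := by positivity
    push_cast
    field_simp

/-- The sign of the reversal permutation. -/
noncomputable def sgnRev (R : Type*) [CommRing R] (N : ℕ) : R :=
  ((Equiv.Perm.sign (Fin.revPerm : Equiv.Perm (Fin N)) : ℤ) : R)

theorem det_rev {R : Type*} [CommRing R] (h : ℤ → R) (μ : YoungDiagram) :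
    Matrix.det (Matrix.of fun i j : Fin (nrows μ) => h ((degVec μ j : ℤ) - (i : ℕ)))
      = sgnRev R (nrows μ) * SchurJT h μ := by
  unfold sgnRev SchurJT JT
  rw [← Matrix.det_permute]
  congr 1
  ext i j
  simp only [Matrix.of_apply, Matrix.submatrix_apply, id, Fin.revPerm_apply, Fin.val_rev]
  congr 1
  have := i.2
  have := j.2
  unfold degVec
  omega

theorem Wr_eq (μ : YoungDiagram) : Wr (fun i => He (degVec μ i)) =
    C (∏ j, ((degVec μ j).factorial : ℝ)) * (sgnRev ℝ[X] (nrows μ) * SchurJT hHe μ) := by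
  rw [← det_rev]
  unfold Wr
  simp_rw [iterate_derivative_He]
  rw [map_prod, ← Matrix.det_mul_row]
  rfl

theorem degVec_injective (μ : YoungDiagram) : Function.Injective (fun i => (degVec μ i : ℝ)) := by
  have key : ∀ i j : Fin (nrows μ), i < j → degVec μ j < degVec μ i := by
    intro i j hij
    have hij' : (i : ℕ) < j := hij
    have := μ.rowLen_anti i j hij'.le
    have := j.2
    unfold degVec
    omega
  intro i j hij
  beta_reduce at hij
  have hij : degVec μ i = degVec μ j := by exact_mod_cast hij
  rcases lt_trichotomy i j with h | h | h
  · have := key i j h; omega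
  · exact h
  · have := key j i h; omega

theorem prod_eq_vandermonde (μ : YoungDiagram) :
    (∏ p ∈ Finset.univ.filter (fun p : Fin (nrows μ) × Fin (nrows μ) => p.1 < p.2),
        ((degVec μ p.2 : ℝ) - (degVec μ p.1 : ℝ)))
      = (Matrix.vandermonde fun i => (degVec μ i : ℝ)).det := by
  rw [Matrix.det_vandermonde, Finset.prod_filter, ← Finset.univ_product_univ, Finset.prod_product]
  refine Finset.prod_congr rfl fun i _ => ?_
  rw [← Finset.prod_filter]
  refine Finset.prod_congr ?_ fun _ _ => rfl
  ext j; simp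

theorem vandermonde_eq (μ : YoungDiagram) :
    (Matrix.vandermonde fun i => (degVec μ i : ℝ)).det =
      (∏ j, ((degVec μ j).factorial : ℝ)) * (sgnRev ℝ (nrows μ) * SchurJT hInv μ) := by
  rw [← det_rev, ← Matrix.det_mul_row]
  rw [Matrix.det_eval_matrixOfPolynomials_eq_det_vandermonde _
    (fun i => descPochhammer ℝ i) (fun i => descPochhammer_natDegree ℝ i)
    (fun i => monic_descPochhammer ℝ i), ← Matrix.det_transpose]
  congr 1
  ext i j
  simp only [Matrix.transpose_apply, Matrix.of_apply]
  rw [descPochhammer_eval_eq_descFactorial, descFact_hInv]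

theorem count_mul_HeW (μ : YoungDiagram) :
    C (SYTCount μ : ℝ) * HeW μ = C (μ.card.factorial : ℝ) * SchurJT hHe μ := by
  have hv0 : (Matrix.vandermonde fun i => (degVec μ i : ℝ)).det ≠ 0 :=
    Matrix.det_vandermonde_ne_zero_iff.2 (degVec_injective μ)
  unfold HeW
  rw [prod_eq_vandermonde, Wr_eq, SYTCount_formula _ μ rfl]
  have hs : sgnRev ℝ[X] (nrows μ) = C (sgnRev ℝ (nrows μ)) := by
    unfold sgnRev; simp
  rw [hs]
  rw [vandermonde_eq] at hv0 ⊢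
  set P := ∏ j, ((degVec μ j).factorial : ℝ)
  set s := sgnRev ℝ (nrows μ)
  set S := SchurJT hInv μ
  have : C ((μ.card.factorial : ℝ) * S) * (C ((P * (s * S))⁻¹) * (C P * (C s * SchurJT hHe μ)))
      = C ((μ.card.factorial : ℝ) * ((P * (s * S))⁻¹ * (P * (s * S)))) * SchurJT hHe μ := by
    simp only [C_mul]; ring
  rw [this, inv_mul_cancel₀ hv0, mul_one]

theorem stmt16 (lam : YoungDiagram) (h : lam ≠ ⊥) :
    C (SYTCount lam : ℝ) * HeW lam
      = X * (∑ᶠ μ ∈ {μ : YoungDiagram | AddBox μ lam}, C (SYTCount μ : ℝ) * HeW μ)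
        - C ((lam.card : ℝ) - 1) *
            ((∑ᶠ ρ ∈ {ρ : YoungDiagram | AddDominoH ρ lam}, C (SYTCount ρ : ℝ) * HeW ρ)
              - ∑ᶠ ρ ∈ {ρ : YoungDiagram | AddDominoV ρ lam}, C (SYTCount ρ : ℝ) * HeW ρ) := by
  have hpos : 0 < lam.card := by
    rcases Nat.eq_zero_or_pos lam.card with h0 | h0
    · exfalso
      apply h
      ext c
      have : lam.cells = ∅ := Finset.card_eq_zero.1 h0
      simp [this]
    · exact h0
  obtain ⟨n, hn⟩ : ∃ n, lam.card = n + 1 := ⟨lam.card - 1, by omega⟩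
  simp_rw [count_mul_HeW]
  rw [← finsum_mem_eq_of_bijOn _ (bijB lam) (fun _ _ => rfl),
    ← finsum_mem_eq_of_bijOn _ (bijH lam) (fun _ _ => rfl),
    ← finsum_mem_eq_of_bijOn _ (bijV lam) (fun _ _ => rfl)]
  simp only [finsum_mem_coe_finset]
  have hB : ∑ j ∈ rB lam, C ((trim lam (fB lam j)).card.factorial : ℝ)
        * SchurJT hHe (trim lam (fB lam j))
      = C (n.factorial : ℝ) * ∑ j ∈ rB lam, SchurJT hHe (trim lam (fB lam j)) := by
    rw [Finset.mul_sum]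
    refine Finset.sum_congr rfl fun j hj => ?_
    have := card_trim_fB hj
    rw [show (trim lam (fB lam j)).card = n by omega]
  have key : ∀ k, lam.card = k + 2 → C ((lam.card : ℝ) - 1) * C (k.factorial : ℝ)
      = C (n.factorial : ℝ) := by
    intro k hk
    rw [← C_mul, show n = k + 1 by omega, hk, Nat.factorial_succ]
    congr 1
    push_cast
    ring
  have hH : C ((lam.card : ℝ) - 1) * ∑ j ∈ rH lam, C ((trim lam (fH lam j)).card.factorial : ℝ)
        * SchurJT hHe (trim lam (fH lam j))
      = C (n.factorial : ℝ) * ∑ j ∈ rH lam, SchurJT hHe (trim lam (fH lam j)) := by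
    rw [Finset.mul_sum, Finset.mul_sum]
    refine Finset.sum_congr rfl fun j hj => ?_
    rw [← mul_assoc, key _ (card_of_dominoH ((bijH lam).1 hj))]
  have hV : C ((lam.card : ℝ) - 1) * ∑ j ∈ rV lam, C ((trim lam (fV lam j)).card.factorial : ℝ)
        * SchurJT hHe (trim lam (fV lam j))
      = C (n.factorial : ℝ) * ∑ j ∈ rV lam, SchurJT hHe (trim lam (fV lam j)) := by
    rw [Finset.mul_sum, Finset.mul_sum]
    refine Finset.sum_congr rfl fun j hj => ?_
    rw [← mul_assoc, key _ (card_of_dominoV ((bijV lam).1 hj))]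
  rw [mul_sub, hH, hV, hB]
  have e := SchurJT_euler hHe hHe_zero hHe_neg X (-1) hHe_rec lam
  have hf : C (lam.card.factorial : ℝ) = C (n.factorial : ℝ) * (lam.card : ℝ[X]) := by
    rw [hn, Nat.factorial_succ]
    push_cast
    simp only [map_add, map_mul, map_one, map_natCast]
    ring
  rw [hf, mul_assoc, e]
  ring
end

section
/- If λ = (n,…,n) is a rectangular partition with m rows, then L_λ^(α)(x) = l_{λ'}^(−α−n)(x) for all α, where λ' = (m,…,m) has n rows and L_λ^(α) is the monic Wronskian of the classical Laguerre polynomials L_{n_1}^(α),…,L_{n_m}^(α) with n_i = n+m−i. -/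
open Polynomial

/-- Classical Laguerre polynomials with parameter `α`, defined by their 3-term recurrence. -/
noncomputable def Lag (α : ℝ) : ℕ → Polynomial ℝ
  | 0 => 1
  | 1 => C (α + 1) - X
  | (n + 2) =>
      (C 2 + C (1 / ((n : ℝ) + 2)) * (C (α - 1) - X)) * Lag α (n + 1)
        - C (1 + (α - 1) / ((n : ℝ) + 2)) * Lag α n

/-- Modified Laguerre polynomials `l_n^(α)(x) := n! · L_n^(α-n)(-x)`. -/
noncomputable def lmod (α : ℝ) (n : ℕ) : Polynomial ℝ :=
  (Nat.factorial n : ℝ) • ((Lag (α - n) n).comp (-X))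

/-- `pp β k = L_k^(β-k)(x)`, the coefficients of `(1+t)^β exp(-xt)`. -/
noncomputable def pp (β : ℝ) : ℕ → Polynomial ℝ
  | 0 => 1
  | 1 => C β - X
  | (k + 2) => C (1 / ((k : ℝ) + 2)) *
      ((C (β - k - 1) - X) * pp β (k + 1) - X * pp β k)

lemma pp_zero (β : ℝ) : pp β 0 = 1 := by rw [pp]

lemma pp_one (β : ℝ) : pp β 1 = C β - X := by rw [pp]

lemma C_cast_add_two (k : ℕ) : (C ((k : ℝ) + 2) : Polynomial ℝ) = (k : Polynomial ℝ) + 2 := by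
  rw [C_add, C_eq_natCast]; rfl

lemma pp_rec (β : ℝ) (k : ℕ) :
    ((k : Polynomial ℝ) + 2) * pp β (k + 2) =
      (C β - (k : Polynomial ℝ) - 1 - X) * pp β (k + 1) - X * pp β k := by
  have h : ((k : ℝ) + 2) ≠ 0 := by positivity
  rw [pp, ← C_cast_add_two, ← mul_assoc, ← C_mul, mul_one_div_cancel h, C_1, one_mul]
  simp

lemma pp_cancel (k : ℕ) {a b : Polynomial ℝ}
    (h : ((k : Polynomial ℝ) + 2) * a = ((k : Polynomial ℝ) + 2) * b) : a = b := by
  have h0 : ((k : ℝ) + 2) ≠ 0 := by positivity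
  rw [← C_cast_add_two] at h
  exact mul_left_cancel₀ (C_ne_zero.2 h0) h

lemma pp_pascal (β : ℝ) : ∀ k, pp (β + 1) (k + 1) = pp β (k + 1) + pp β k
  | 0 => by simp [pp_zero, pp_one]; ring
  | 1 => by
      apply pp_cancel 0
      have h1 := pp_rec (β + 1) 0
      have h2 := pp_rec β 0
      simp only [Nat.cast_zero, zero_add, pp_zero, pp_one, C_add, C_1, Nat.reduceAdd,
        derivative_mul, derivative_C, derivative_sub, derivative_ofNat, derivative_one,
        derivative_zero, derivative_X] at *
      linear_combination h1 - h2
  | (k + 2) => by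
      apply pp_cancel (k + 1)
      have h1 := pp_rec (β + 1) (k + 1)
      have h2 := pp_rec β (k + 1)
      have h3 := pp_rec β k
      have i1 := pp_pascal β (k + 1)
      have i2 := pp_pascal β k
      rw [i1, i2] at h1
      simp only [map_add, map_sub, Nat.cast_add, Nat.cast_one, C_1] at *
      linear_combination h1 - h2 - h3

lemma pp_deriv (β : ℝ) : ∀ k, derivative (pp β (k + 1)) = - pp β k
  | 0 => by simp [pp_zero, pp_one]
  | 1 => by
      apply pp_cancel 0
      have h1 := congrArg derivative (pp_rec β 0)
      simp only [Nat.cast_zero, zero_add, pp_zero, pp_one, C_add, C_1, Nat.reduceAdd,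
        derivative_mul, derivative_C, derivative_sub, derivative_ofNat, derivative_one,
        derivative_zero, derivative_X] at *
      linear_combination h1
  | (k + 2) => by
      apply pp_cancel (k + 1)
      have h1 := congrArg derivative (pp_rec β (k + 1))
      have h3 := pp_rec β k
      have i1 := pp_deriv β (k + 1)
      have i2 := pp_deriv β k
      simp only [derivative_mul, derivative_C, derivative_sub, derivative_add, derivative_natCast,
        derivative_one, derivative_ofNat, derivative_X, zero_mul, zero_add] at h1
      rw [i1, i2] at h1
      simp only [map_add, map_sub, Nat.cast_add, Nat.cast_one, C_1] at *
      linear_combination h1 + h3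

lemma Lag_eq (α : ℝ) : ∀ k : ℕ, Lag α k = pp (α + k) k
  | 0 => by simp [pp, Lag]
  | 1 => by simp [pp, Lag]
  | (k + 2) => by
      apply pp_cancel k
      have h : ((k : ℝ) + 2) ≠ 0 := by positivity
      rw [Lag, Lag_eq α k, Lag_eq α (k + 1)]
      have h1 := pp_rec (α + k) k
      have e1 := pp_pascal (α + k) k
      have e2 := pp_pascal (α + k) (k + 1)
      have e3 := pp_pascal (α + k + 1) (k + 1)
      rw [e2, e1] at e3
      have c1 : α + ((k + 1 : ℕ) : ℝ) = α + k + 1 := by push_cast; ring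
      have c2 : α + ((k + 2 : ℕ) : ℝ) = α + k + 1 + 1 := by push_cast; ring
      rw [c1, c2, e1, e3]
      have u : ((k : Polynomial ℝ) + 2) * C (1 / ((k : ℝ) + 2)) = 1 := by
        rw [← C_cast_add_two, ← C_mul, mul_one_div_cancel h, C_1]
      have u2 : C (1 + (α - 1) / ((k : ℝ) + 2)) = 1 + C (α - 1) * C (1 / ((k : ℝ) + 2)) := by
        rw [← C_mul, ← C_1, ← C_add]; congr 1; ring
      have h2 : (C (2:ℝ)) = 2 := rfl
      rw [u2, h2]
      generalize C (1 / ((k : ℝ) + 2)) = w at *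
      simp only [C_sub, C_add, C_1, C_eq_natCast] at *
      linear_combination -h1 +
        ((C α - 1 - X) * (pp (α + k) (k + 1) + pp (α + k) k) - (C α - 1) * pp (α + k) k) * u

lemma pp_deriv_iter (β : ℝ) (i : ℕ) : ∀ k, derivative^[i] (pp β k) =
    if i ≤ k then (-1) ^ i * pp β (k - i) else 0 := by
  induction i with
  | zero => simp
  | succ i ih =>
    intro k
    rw [Function.iterate_succ_apply]
    cases k with
    | zero => simp [pp]
    | succ k =>
      rw [pp_deriv, iterate_derivative_neg, ih]
      split_ifs with h1 h2 h2
      · rw [Nat.add_sub_add_right]; ring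
      · omega
      · omega
      · simp

/-- `qq β k = L_k^(β-k)(-x)`. -/
noncomputable def qq (β : ℝ) (k : ℕ) : Polynomial ℝ := (pp β k).comp (-X)

lemma qq_zero (β : ℝ) : qq β 0 = 1 := by simp [qq, pp]

lemma qq_deriv (β : ℝ) (k : ℕ) : derivative (qq β (k + 1)) = qq β k := by
  simp [qq, derivative_comp, pp_deriv]

lemma qq_deriv_iter (β : ℝ) (i : ℕ) : ∀ k, derivative^[i] (qq β k) =
    if i ≤ k then qq β (k - i) else 0 := by
  induction i with
  | zero => simp
  | succ i ih =>
    intro k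
    rw [Function.iterate_succ_apply]
    cases k with
    | zero => simp [qq_zero]
    | succ k =>
      rw [qq_deriv, ih]
      simp

lemma qq_one (β : ℝ) : qq β 1 = C β + X := by simp [qq, pp]

lemma qq_rec (β : ℝ) (k : ℕ) :
    ((k : Polynomial ℝ) + 2) * qq β (k + 2) =
      (C β - (k : Polynomial ℝ) - 1 + X) * qq β (k + 1) + X * qq β k := by
  have h := congrArg (fun p => p.comp (-X)) (pp_rec β k)
  simp only [mul_comp, sub_comp, add_comp, C_comp, X_comp, natCast_comp, one_comp,
    ofNat_comp] at h
  simp only [qq]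
  linear_combination h

lemma lmod_eq (β : ℝ) (k : ℕ) : lmod β k = C (Nat.factorial k : ℝ) * qq β k := by
  rw [lmod, Lag_eq, qq, smul_eq_C_mul]; simp

lemma qq_coeff (β : ℝ) (k : ℕ) : ∀ j, k ≤ j →
    (qq β k).coeff j = if j = k then ((Nat.factorial k : ℝ))⁻¹ else 0 := by
  induction k with
  | zero => intro j _; simp [qq_zero, coeff_one]
  | succ k ih =>
    intro j hj
    obtain ⟨j, rfl⟩ : ∃ j', j = j' + 1 := ⟨j - 1, by omega⟩
    have h := coeff_derivative (qq β (k + 1)) j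
    rw [qq_deriv, ih j (by omega)] at h
    have h0 : ((j : ℝ) + 1) ≠ 0 := by positivity
    apply mul_right_cancel₀ h0
    rw [← h]
    by_cases hjk : j = k
    · subst hjk
      simp [Nat.factorial_succ]
      field_simp
    · simp [hjk]

lemma lmod_coeff (β : ℝ) (k : ℕ) : (lmod β k).coeff k = 1 := by
  rw [lmod_eq, coeff_C_mul, qq_coeff β k k le_rfl, if_pos rfl]
  exact mul_inv_cancel₀ (by positivity)

lemma lmod_natDegree (β : ℝ) (k : ℕ) : (lmod β k).natDegree ≤ k := by
  rw [natDegree_le_iff_coeff_eq_zero]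
  intro j hj
  rw [lmod_eq, coeff_C_mul, qq_coeff β k j hj.le, if_neg hj.ne', mul_zero]

lemma ps_ode_aux {R : Type*} [CommRing R] [IsDomain R] [IsAddTorsionFree R] (f g : PowerSeries R)
    (b x : R)
    (hf0 : PowerSeries.coeff 0 f = 1) (hg0 : PowerSeries.coeff 0 g = 1)
    (hf1 : PowerSeries.coeff 1 f = b - x) (hg1 : PowerSeries.coeff 1 g = - b + x)
    (hf : ∀ k : ℕ, ((k : R) + 2) * PowerSeries.coeff (k + 2) f =
      (b - k - 1 - x) * PowerSeries.coeff (k + 1) f - x * PowerSeries.coeff k f)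
    (hg : ∀ k : ℕ, ((k : R) + 2) * PowerSeries.coeff (k + 2) g =
      (-b - k - 1 + x) * PowerSeries.coeff (k + 1) g + x * PowerSeries.coeff k g) :
    f * g = 1 := by
  have aux : ∀ (f : PowerSeries R) (b x : R) (hf0 : PowerSeries.coeff 0 f = 1)
      (hf1 : PowerSeries.coeff 1 f = b - x)
      (hf : ∀ k : ℕ, ((k : R) + 2) * PowerSeries.coeff (k + 2) f =
        (b - k - 1 - x) * PowerSeries.coeff (k + 1) f - x * PowerSeries.coeff k f),
      (1 + PowerSeries.X) * PowerSeries.derivative R f =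
        PowerSeries.C (b - x) * f - PowerSeries.C x * (PowerSeries.X * f) := by
    intro f b x hf0 hf1 hf
    ext k
    rw [add_mul, one_mul]
    simp only [map_add, map_sub (PowerSeries.coeff k), PowerSeries.coeff_C_mul]
    rcases k with _ | k
    · rw [PowerSeries.coeff_zero_X_mul, PowerSeries.coeff_zero_X_mul,
        PowerSeries.coeff_derivative, hf0, hf1]; simp
    · rw [PowerSeries.coeff_succ_X_mul, PowerSeries.coeff_succ_X_mul,
        PowerSeries.coeff_derivative, PowerSeries.coeff_derivative]
      have := hf k
      push_cast
      linear_combination this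
  have h1 := aux f b x hf0 hf1 hf
  have h2 := aux g (-b) (-x) hg0 (by rw [hg1]; ring) (by intro k; rw [hg k]; ring)
  apply PowerSeries.derivative.ext
  · have h0 : (1 + PowerSeries.X : PowerSeries R) ≠ 0 := by
      intro h
      have := congrArg (PowerSeries.coeff 0) h
      simp at this
    apply mul_left_cancel₀ h0
    rw [Derivation.leibniz]
    simp only [map_sub, map_neg, smul_eq_mul, Derivation.map_one_eq_zero] at *
    linear_combination g * h1 + f * h2
  · rw [← PowerSeries.coeff_zero_eq_constantCoeff_apply,
      ← PowerSeries.coeff_zero_eq_constantCoeff_apply,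
      PowerSeries.coeff_zero_eq_constantCoeff_apply, map_mul,
      ← PowerSeries.coeff_zero_eq_constantCoeff_apply, ← PowerSeries.coeff_zero_eq_constantCoeff_apply,
      hf0, hg0]
    simp

lemma pp_mul_qq (β : ℝ) : PowerSeries.mk (pp β) * PowerSeries.mk (qq (-β)) = 1 := by
  apply ps_ode_aux _ _ (C β) X <;> simp only [PowerSeries.coeff_mk]
  · exact pp_zero β
  · exact qq_zero _
  · exact pp_one β
  · rw [qq_one, C_neg]
  · exact pp_rec β
  · intro k; rw [qq_rec, C_neg]

lemma conv (β : ℝ) (k : ℕ) : ∑ a ∈ Finset.range (k + 1), pp β a * qq (-β) (k - a) =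
    if k = 0 then 1 else 0 := by
  have h := congrArg (PowerSeries.coeff k) (pp_mul_qq β)
  rw [PowerSeries.coeff_mul, Finset.Nat.sum_antidiagonal_eq_sum_range_succ_mk,
    PowerSeries.coeff_one] at h
  simpa using h

/-- Shifted Toeplitz matrix. -/
def toe {R : Type*} [CommRing R] (f : ℕ → R) (s r : ℕ) : Matrix (Fin r) (Fin r) R :=
  Matrix.of fun i j => if (i : ℕ) ≤ s + j then f (s + j - i) else 0

lemma toe_mul {R : Type*} [CommRing R] (f g : ℕ → R)
    (h : ∀ k, ∑ a ∈ Finset.range (k + 1), f a * g (k - a) = if k = 0 then 1 else 0) (N : ℕ) :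
    toe f 0 N * toe g 0 N = 1 := by
  ext i j
  rw [Matrix.mul_apply, Matrix.one_apply]
  simp only [toe, Matrix.of_apply, zero_add]
  rw [Fin.sum_univ_eq_sum_range (fun k => (if (i : ℕ) ≤ k then f (k - i) else 0) *
    (if k ≤ (j : ℕ) then g (j - k) else 0)) N]
  by_cases hij : (i : ℕ) ≤ j
  · have hs : ∑ k ∈ Finset.range N, (if (i : ℕ) ≤ k then f (k - i) else 0) *
        (if k ≤ (j : ℕ) then g (j - k) else 0) =
        ∑ k ∈ Finset.Ico (i : ℕ) (j + 1), f (k - i) * g (j - k) := by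
      symm
      apply Finset.sum_subset_zero_on_sdiff
      · intro k hk
        simp only [Finset.mem_Ico, Finset.mem_range] at *
        omega
      · intro k hk
        simp only [Finset.mem_sdiff, Finset.mem_Ico, Finset.mem_range, not_and] at hk
        by_cases h1 : (i : ℕ) ≤ k
        · rw [if_neg (show ¬ k ≤ (j : ℕ) by have := hk.2 h1; omega), mul_zero]
        · rw [if_neg h1, zero_mul]
      · intro k hk
        simp only [Finset.mem_Ico] at hk
        rw [if_pos hk.1, if_pos (by omega)]
    rw [hs, Finset.sum_Ico_eq_sum_range]
    have h2 := h (j - i)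
    rw [show (j : ℕ) + 1 - i = j - i + 1 by omega]
    have h3 : ∑ k ∈ Finset.range ((j : ℕ) - i + 1), f (i + k - i) * g (j - (i + k)) =
        ∑ k ∈ Finset.range ((j : ℕ) - i + 1), f k * g (j - i - k) := by
      apply Finset.sum_congr rfl
      intro k _
      rw [Nat.add_sub_cancel_left, Nat.sub_sub]
    rw [h3, h2]
    congr 1
    rw [eq_iff_iff, Fin.ext_iff]; omega
  · rw [if_neg (by rintro rfl; exact hij le_rfl)]
    apply Finset.sum_eq_zero
    intro k _
    by_cases h1 : (i : ℕ) ≤ k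
    · rw [if_neg (show ¬ k ≤ (j : ℕ) by omega), mul_zero]
    · rw [if_neg h1, zero_mul]

lemma toe_assoc {R : Type*} [CommRing R] (f g : ℕ → R)
    (h : ∀ k, ∑ a ∈ Finset.range (k + 1), f a * g (k - a) = if k = 0 then 1 else 0) (m n : ℕ) :
    Associated (toe f n m).det (toe g m n).det := by
  let a : Fin m ⊕ Fin n ≃ Fin (m + n) := finSumFinEquiv
  let b : Fin n ⊕ Fin m ≃ Fin (m + n) := finSumFinEquiv.trans (finCongr (add_comm n m))
  let T := toe f 0 (m + n)
  let S := toe g 0 (m + n)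
  have hTS : T * S = 1 := toe_mul f g h (m + n)
  let M := T.submatrix a b
  let N := S.submatrix b a
  have hMN : M * N = 1 := by
    rw [Matrix.submatrix_mul_equiv, hTS, Matrix.submatrix_one_equiv]
  have hM : M = Matrix.fromBlocks M.toBlocks₁₁ M.toBlocks₁₂ M.toBlocks₂₁ M.toBlocks₂₂ :=
    (Matrix.fromBlocks_toBlocks M).symm
  have hN : N = Matrix.fromBlocks N.toBlocks₁₁ N.toBlocks₁₂ N.toBlocks₂₁ N.toBlocks₂₂ :=
    (Matrix.fromBlocks_toBlocks N).symm
  have hB : M.toBlocks₁₂ = toe f n m := by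
    ext i j
    simp [M, T, toe, a, b, Matrix.toBlocks₁₂]
    simp only [Fin.le_iff_val_le_val, Fin.val_castAdd, Fin.val_addNat, add_comm n]
  have hF : N.toBlocks₁₂ = toe g m n := by
    ext i j
    simp [N, S, toe, a, b, Matrix.toBlocks₁₂]
    simp only [Fin.le_iff_val_le_val, Fin.val_cast, Fin.val_castAdd, Fin.val_natAdd]
  have hb := hMN
  rw [hM, hN, Matrix.fromBlocks_multiply, ← Matrix.fromBlocks_one, Matrix.fromBlocks_inj] at hb
  obtain ⟨_, h12, _, h22⟩ := hb
  let K : Matrix (Fin n ⊕ Fin m) (Fin n ⊕ Fin m) R :=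
    Matrix.fromBlocks N.toBlocks₁₂ 0 N.toBlocks₂₂ 1
  have hMK : M * K = Matrix.fromBlocks 0 M.toBlocks₁₂ 1 M.toBlocks₂₂ := by
    conv_lhs => rw [hM]
    rw [Matrix.fromBlocks_multiply, h12, h22]
    simp
  let s := Equiv.sumComm (Fin n) (Fin m)
  have hd : (M.submatrix s (Equiv.refl _)) * K = Matrix.fromBlocks 1 M.toBlocks₂₂ 0 M.toBlocks₁₂ := by
    have : (M.submatrix s (Equiv.refl _)) * K = (M * K).submatrix s (Equiv.refl _) := by
      rw [← Matrix.submatrix_mul_equiv M K s (Equiv.refl _) (Equiv.refl _)]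
      simp
    rw [this, hMK]
    ext i j
    rcases i with i | i <;> rcases j with j | j <;> simp [s]
  have hu : IsUnit (M.submatrix s (Equiv.refl _)).det := by
    apply Matrix.isUnit_det_of_right_inverse (B := N.submatrix (Equiv.refl _) s)
    rw [Matrix.submatrix_mul_equiv, hMN, Matrix.submatrix_one_equiv]
  have hdet := congrArg Matrix.det hd
  rw [Matrix.det_mul, Matrix.det_fromBlocks_zero₁₂, Matrix.det_fromBlocks_zero₂₁, Matrix.det_one,
    Matrix.det_one, hB, hF, mul_one, one_mul] at hdet
  rw [← hdet]
  exact associated_unit_mul_left _ _ hu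

lemma assoc_rev {R : Type*} [CommRing R] {r : ℕ} (M : Matrix (Fin r) (Fin r) R) :
    Associated (M.submatrix id Fin.revPerm).det M.det := by
  rw [Matrix.det_permute']
  apply associated_unit_mul_left
  rcases Int.units_eq_one_or (Equiv.Perm.sign (Fin.revPerm : Equiv.Perm (Fin r))) with h | h <;>
    simp [h]

lemma Wr_rev {r : ℕ} (s : ℕ) (p : ℕ → Polynomial ℝ) :
    Associated (Wr (fun i : Fin r => p (s + r - 1 - (i : ℕ)))) (Wr (fun i : Fin r => p (s + i))) := by
  have := assoc_rev (Matrix.of fun i j : Fin r => derivative^[(i : ℕ)] (p (s + j)))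
  refine Associated.trans (Associated.of_eq ?_) this
  unfold Wr
  congr 1
  ext1 i j
  simp only [Matrix.of_apply, Matrix.submatrix_apply, id, Fin.revPerm_apply, Fin.val_rev]
  congr 2
  omega

lemma pp_shift (β : ℝ) (M j : ℕ) : j < M → ∀ n, pp (β + j) (n + j) =
    ∑ l ∈ Finset.range M, (Nat.choose j l : Polynomial ℝ) * pp β (n + l) := by
  induction j with
  | zero =>
    intro hM n
    rw [Finset.sum_eq_single 0]
    · simp
    · intro b _ hb
      rw [Nat.choose_eq_zero_of_lt (by omega)]; simp
    · intro h; simp at h; omega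
  | succ j ih =>
    intro hM n
    obtain ⟨M, rfl⟩ : ∃ M', M = M' + 1 := ⟨M - 1, by omega⟩
    have h1 := pp_pascal (β + j) (n + j)
    rw [ih (by omega) n, show n + j + 1 = (n + 1) + j by ring, ih (by omega) (n + 1)] at h1
    rw [show β + ((j + 1 : ℕ) : ℝ) = β + j + 1 by push_cast; ring,
      show n + (j + 1) = n + 1 + j by ring, h1]
    rw [Finset.sum_range_succ, Nat.choose_eq_zero_of_lt (show j < M by omega),
      Finset.sum_range_succ' _ M, Finset.sum_range_succ' _ M]
    simp only [Nat.choose_succ_succ, Nat.cast_add, add_mul, Finset.sum_add_distrib]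
    have : ∑ x ∈ Finset.range M, (j.choose x : Polynomial ℝ) * pp β (n + (x + 1)) =
        ∑ x ∈ Finset.range M, (j.choose x : Polynomial ℝ) * pp β (n + 1 + x) := by
      apply Finset.sum_congr rfl
      intro x _
      rw [show n + (x + 1) = n + 1 + x by ring]
    rw [this]
    simp
    ring

lemma Wr_Lag (α : ℝ) (m n : ℕ) :
    Associated (Wr (fun i : Fin m => Lag α (n + i))) (toe (pp (α + n)) n m).det := by
  let U : Matrix (Fin m) (Fin m) (Polynomial ℝ) := Matrix.of fun l j => (Nat.choose j l : Polynomial ℝ)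
  let D : Matrix (Fin m) (Fin m) (Polynomial ℝ) := Matrix.diagonal fun i => (-1) ^ (i : ℕ)
  have key : (Matrix.of fun i j : Fin m => derivative^[(i : ℕ)] (Lag α (n + j))) =
      D * (toe (pp (α + n)) n m * U) := by
    ext1 i j
    rw [Matrix.diagonal_mul, Matrix.mul_apply]
    simp only [toe, U, Matrix.of_apply]
    rw [Lag_eq, show α + ((n + j : ℕ) : ℝ) = α + n + (j : ℕ) by push_cast; ring,
      pp_shift _ m j j.2, ← Fin.sum_univ_eq_sum_range
        (fun l => (Nat.choose j l : Polynomial ℝ) * pp (α + n) (n + l)),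
      iterate_derivative_sum, Finset.mul_sum]
    apply Finset.sum_congr rfl
    intro l _
    rw [← C_eq_natCast, iterate_derivative_C_mul, pp_deriv_iter]
    split_ifs <;> ring
  have hU : U.det = 1 := by
    rw [Matrix.det_of_upperTriangular]
    · simp [U]
    · intro i j hij
      simp only [U, Matrix.of_apply]
      rw [Nat.choose_eq_zero_of_lt (by simpa using hij), Nat.cast_zero]
  have hD : IsUnit D.det := by
    rw [Matrix.det_diagonal, Finset.prod_pow_eq_pow_sum]
    exact (isUnit_one.neg).pow _
  rw [Wr, key, Matrix.det_mul, Matrix.det_mul, hU, mul_one]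
  exact associated_unit_mul_left _ _ hD

lemma Wr_lmod (β : ℝ) (m n : ℕ) :
    Associated (Wr (fun i : Fin n => lmod β (m + i))) (toe (qq β) m n).det := by
  let D : Matrix (Fin n) (Fin n) (Polynomial ℝ) :=
    Matrix.diagonal fun j => C (Nat.factorial (m + j) : ℝ)
  have key : (Matrix.of fun i j : Fin n => derivative^[(i : ℕ)] (lmod β (m + j))) =
      toe (qq β) m n * D := by
    ext1 i j
    rw [Matrix.mul_diagonal]
    simp only [toe, Matrix.of_apply]
    rw [lmod_eq, iterate_derivative_C_mul, qq_deriv_iter, mul_comm]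
  have hD : IsUnit D.det := by
    rw [Matrix.det_diagonal, ← map_prod]
    apply IsUnit.map
    rw [isUnit_iff_ne_zero, Finset.prod_ne_zero_iff]
    intro i _
    positivity
  rw [Wr, key, Matrix.det_mul]
  exact associated_mul_unit_left _ _ hD

lemma coeff_prod_le {ι : Type*} (s : Finset ι) (f : ι → Polynomial ℝ) (d : ι → ℕ)
    (h : ∀ i, (f i).natDegree ≤ d i) :
    (∏ i ∈ s, f i).natDegree ≤ ∑ i ∈ s, d i ∧
    (∏ i ∈ s, f i).coeff (∑ i ∈ s, d i) = ∏ i ∈ s, (f i).coeff (d i) := by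
  classical
  induction s using Finset.induction_on with
  | empty => simp
  | insert a s ha ih =>
    rw [Finset.prod_insert ha, Finset.sum_insert ha, Finset.prod_insert ha]
    refine ⟨natDegree_mul_le_of_le (h a) ih.1, ?_⟩
    rw [coeff_mul_add_eq_of_natDegree_le (h a) ih.1, ih.2]

lemma coeff_det_le {r : ℕ} (M : Matrix (Fin r) (Fin r) (Polynomial ℝ)) (d : Fin r → ℕ)
    (h : ∀ i j, (M i j).natDegree ≤ d j) :
    M.det.natDegree ≤ ∑ j, d j ∧
    M.det.coeff (∑ j, d j) = (Matrix.of fun i j => (M i j).coeff (d j)).det := by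
  constructor
  · rw [Matrix.det_apply]
    apply natDegree_sum_le_of_forall_le
    intro σ _
    refine (natDegree_smul_le _ _).trans ?_
    exact (coeff_prod_le Finset.univ (fun i => M (σ i) i) d (fun i => h _ _)).1
  · rw [Matrix.det_apply, Matrix.det_apply, finsetSum_coeff]
    apply Finset.sum_congr rfl
    intro σ _
    rw [coeff_smul, (coeff_prod_le Finset.univ (fun i => M (σ i) i) d (fun i => h _ _)).2]
    rfl

lemma Wr_leadingCoeff {r : ℕ} (N : Fin r → ℕ) (hN : Function.Injective N)
    (p : Fin r → Polynomial ℝ) (hd : ∀ j, (p j).natDegree ≤ N j) (hc : ∀ j, (p j).coeff (N j) = 1) :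
    (Wr p).leadingCoeff = (Matrix.vandermonde fun j => (N j : ℝ)).det ∧
    (Matrix.vandermonde fun j => (N j : ℝ)).det ≠ 0 := by
  have hV0 : (Matrix.vandermonde fun j => (N j : ℝ)).det ≠ 0 := by
    rw [Matrix.det_vandermonde_ne_zero_iff]
    intro i j hij
    exact hN (Nat.cast_injective (R := ℝ) hij)
  refine ⟨?_, hV0⟩
  let D : Matrix (Fin r) (Fin r) (Polynomial ℝ) := Matrix.diagonal fun i => X ^ (i : ℕ)
  let W : Matrix (Fin r) (Fin r) (Polynomial ℝ) := Matrix.of fun i j => derivative^[(i : ℕ)] (p j)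
  have hent : ∀ i j, (D * W) i j = derivative^[(i : ℕ)] (p j) * X ^ (i : ℕ) := by
    intro i j
    rw [Matrix.diagonal_mul, mul_comm]; rfl
  have hzero : ∀ i j : Fin r, N j < (i : ℕ) → derivative^[(i : ℕ)] (p j) = 0 := by
    intro i j hij
    exact iterate_derivative_eq_zero ((hd j).trans_lt hij)
  have h1 := coeff_det_le (D * W) N (by
    intro i j
    rw [hent]
    by_cases hij : (i : ℕ) ≤ N j
    · refine natDegree_mul_le.trans ?_
      have := natDegree_iterate_derivative (p j) i
      have := hd j
      rw [natDegree_X_pow]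
      omega
    · rw [hzero i j (by omega)]; simp)
  have hdet : (Matrix.of fun i j => ((D * W) i j).coeff (N j)).det =
      (Matrix.vandermonde fun j => (N j : ℝ)).det := by
    rw [Matrix.det_eval_matrixOfPolynomials_eq_det_vandermonde (fun j => (N j : ℝ))
      (fun i => descPochhammer ℝ i) (fun i => descPochhammer_natDegree ℝ i)
      (fun i => monic_descPochhammer ℝ i), ← Matrix.det_transpose]
    congr 1
    ext i j
    simp only [Matrix.transpose_apply, Matrix.of_apply]
    rw [descPochhammer_eval_eq_descFactorial, hent]
    by_cases hij : (j : ℕ) ≤ N i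
    · rw [coeff_mul_X_pow', if_pos hij, coeff_iterate_derivative, Nat.sub_add_cancel hij, hc]
      simp
    · rw [hzero j i (by omega), Nat.descFactorial_eq_zero_iff_lt.2 (by omega)]; simp
  rw [hdet] at h1
  have hDW : (D * W).det.leadingCoeff = (Matrix.vandermonde fun j => (N j : ℝ)).det := by
    have : (D * W).det.natDegree = ∑ j, N j := by
      apply natDegree_eq_of_le_of_coeff_ne_zero h1.1
      rw [h1.2]; exact hV0
    rw [leadingCoeff, this, h1.2]
  rw [Matrix.det_mul, leadingCoeff_mul, Matrix.det_diagonal, leadingCoeff_prod] at hDW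
  simp only [leadingCoeff_X_pow, Finset.prod_const_one, one_mul] at hDW
  exact hDW

/-- For the rectangular partition `λ = (n,…,n)` with `m` rows (degree vector `n_i = n+m-i`),
the monic Wronskian `L_λ^(α)` of the classical Laguerre polynomials equals the Wronskian
Laguerre polynomial `l_{λ'}^(-α-n)` of the conjugate rectangle `λ' = (m,…,m)` with `n` rows
(degree vector `n'_i = m+n-i`), the latter normalized by `∏_{i<j}(n'_j - n'_i)`. -/
theorem stmt17 (α : ℝ) (m n : ℕ) (hm : 0 < m) (hn : 0 < n) :
    C (Wr (fun i : Fin m => Lag α (n + m - 1 - (i : ℕ)))).leadingCoeff⁻¹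
        * Wr (fun i : Fin m => Lag α (n + m - 1 - (i : ℕ)))
      = C (∏ p ∈ Finset.univ.filter (fun p : Fin n × Fin n => p.1 < p.2),
            (((m + n - 1 - (p.2 : ℕ) : ℕ) : ℝ) - ((m + n - 1 - (p.1 : ℕ) : ℕ) : ℝ)))⁻¹
        * Wr (fun i : Fin n => lmod (-α - (n : ℝ)) (m + n - 1 - (i : ℕ))) := by
  have hV : (∏ p ∈ Finset.univ.filter (fun p : Fin n × Fin n => p.1 < p.2),
            (((m + n - 1 - (p.2 : ℕ) : ℕ) : ℝ) - ((m + n - 1 - (p.1 : ℕ) : ℕ) : ℝ))) =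
      (Matrix.vandermonde fun j : Fin n => ((m + n - 1 - (j : ℕ) : ℕ) : ℝ)).det := by
    rw [Matrix.det_vandermonde, Finset.prod_filter, ← Finset.univ_product_univ,
      Finset.prod_product]
    apply Finset.prod_congr rfl
    intro i _
    rw [← Finset.prod_filter]
    apply Finset.prod_congr _ (fun _ _ => rfl)
    ext j; simp
  obtain ⟨hlc, hV0⟩ := Wr_leadingCoeff (fun j : Fin n => m + n - 1 - (j : ℕ))
    (by intro i j hij; simp only at hij; ext; omega)
    (fun i : Fin n => lmod (-α - (n : ℝ)) (m + n - 1 - (i : ℕ)))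
    (fun j => lmod_natDegree _ _) (fun j => lmod_coeff _ _)
  rw [hV]
  have hassoc : Associated (Wr (fun i : Fin m => Lag α (n + m - 1 - (i : ℕ))))
      (Wr (fun i : Fin n => lmod (-α - (n : ℝ)) (m + n - 1 - (i : ℕ)))) := by
    refine (Wr_rev n (Lag α)).trans ((Wr_Lag α m n).trans ?_)
    refine Associated.trans ?_ ((Wr_rev m (lmod (-α - n))).trans (Wr_lmod _ m n)).symm
    apply toe_assoc
    intro k
    rw [show -α - (n : ℝ) = -(α + n) by ring]
    exact conv _ k
  generalize Wr (fun i : Fin m => Lag α (n + m - 1 - (i : ℕ))) = A at *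
  generalize Wr (fun i : Fin n => lmod (-α - (n : ℝ)) (m + n - 1 - (i : ℕ))) = B at *
  generalize (Matrix.vandermonde fun j : Fin n => ((m + n - 1 - (j : ℕ) : ℕ) : ℝ)).det = V at *
  have hB : B ≠ 0 := by rintro rfl; simp at hlc; exact hV0 hlc.symm
  have hA : A ≠ 0 := fun h => hB ((hassoc.eq_zero_iff).1 h)
  have hA' : A.leadingCoeff ≠ 0 := leadingCoeff_ne_zero.2 hA
  apply eq_of_monic_of_associated
  · rw [Monic, leadingCoeff_mul, leadingCoeff_C, inv_mul_cancel₀ hA']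
  · rw [Monic, leadingCoeff_mul, leadingCoeff_C, hlc, inv_mul_cancel₀ hV0]
  · have u1 : IsUnit (C A.leadingCoeff⁻¹) := isUnit_C.2 (inv_ne_zero hA').isUnit
    have u2 : IsUnit (C V⁻¹) := isUnit_C.2 (inv_ne_zero hV0).isUnit
    exact (associated_unit_mul_left _ _ u1).trans
      (hassoc.trans (associated_unit_mul_left _ _ u2).symm)
end
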